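/- Let G be a bridgeless graph in G_{n,n+k} with n ≥ 1 and k ≥ 1. Then: (a) G has a weak distillation in D_k if and only if all 2-bonds of G are trivial; (b) G is equivalent to some graph G† which has a weak distillation D ∈ D_k; (c) if G does not have a weak distillation in D_k, then any graph G† as in (b) is imbalanced and has at least one chain of length zero with respect to each of its weak distillations in D_k. -/

import Mathlib

open Classical Finset

noncomputable section

/-- A finite multigraph: edges carry two (possibly equal) endpoints. -/
structure Multigraph where
  V : Type
  E : Type
  [fintV : Fintype V]
  [fintE : Fintype E]
  src : E → V
  tgt : E → V

attribute [instance] Multigraph.fintV Multigraph.fintE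

namespace Multigraph

variable (G : Multigraph)

/-- Number of vertices. -/
def nV : ℕ := Fintype.card G.V

/-- Number of edges (with multiplicity). -/
def nE : ℕ := Fintype.card G.E

/-- One step along an edge belonging to the edge set `S`. -/
def stepOn (S : Finset G.E) (u v : G.V) : Prop :=
  ∃ e ∈ S, (G.src e = u ∧ G.tgt e = v) ∨ (G.src e = v ∧ G.tgt e = u)

/-- The spanning subgraph with edge set `S` is connected. -/
def ConnOn (S : Finset G.E) : Prop :=
  ∀ u v : G.V, Relation.ReflTransGen (G.stepOn S) u v

/-- `G` is connected. -/
def Connected : Prop := G.ConnOn Finset.univ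

/-- The edge set `F` disconnects `G` (i.e. is a disconnection). -/
def Disconnects (F : Finset G.E) : Prop := ¬ G.ConnOn (Finset.univ \ F)

/-- `d i G`: the number of `i`-disconnections of `G`. -/
def d (i : ℕ) : ℕ :=
  ((Finset.univ : Finset (Finset G.E)).filter fun F => F.card = i ∧ G.Disconnects F).card

/-- The all-terminal reliability `R(G,p)`: each edge is independently retained with
probability `p`; this is the probability that the retained spanning subgraph is connected. -/
def rel (p : ℝ) : ℝ :=
  ∑ S : Finset G.E, if G.ConnOn S then p ^ S.card * (1 - p) ^ (G.nE - S.card) else 0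

/-- `e` is a bridge. -/
def IsBridge (e : G.E) : Prop := G.Disconnects {e}

def Bridgeless : Prop := ∀ e : G.E, ¬ G.IsBridge e

/-- The number of spanning trees of `G` (connected spanning subgraphs with `nV - 1` edges). -/
def treeCount : ℕ :=
  ((Finset.univ : Finset (Finset G.E)).filter fun S => S.card + 1 = G.nV ∧ G.ConnOn S).card

/-- The edge-connectivity: the least size of a disconnecting set of edges. -/
def edgeConnectivity : ℕ :=
  sInf {i : ℕ | ∃ F : Finset G.E, F.card = i ∧ G.Disconnects F}

/-- Degree of a vertex (a loop counts twice). -/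
def deg (v : G.V) : ℕ :=
  (Finset.univ.filter fun e => G.src e = v).card +
    (Finset.univ.filter fun e => G.tgt e = v).card

/-- The edges crossing the vertex set `A`. -/
def cutEdges (A : Finset G.V) : Finset G.E :=
  Finset.univ.filter fun e =>
    (G.src e ∈ A ∧ G.tgt e ∉ A) ∨ (G.src e ∉ A ∧ G.tgt e ∈ A)

/-- `F` is a cut: the set of edges crossing a nontrivial bipartition of the vertices. -/
def IsCut (F : Finset G.E) : Prop :=
  ∃ A : Finset G.V, A.Nonempty ∧ A ≠ Finset.univ ∧ F = G.cutEdges A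

/-- `F` is a bond: a minimal cut. -/
def IsBond (F : Finset G.E) : Prop :=
  G.IsCut F ∧ ∀ F' ⊆ F, G.IsCut F' → F' = F

/-- Number of `s`-bonds of `G`. -/
def bondCount (s : ℕ) : ℕ :=
  ((Finset.univ : Finset (Finset G.E)).filter fun F => F.card = s ∧ G.IsBond F).card

/-- Adjacency of vertices. -/
def Adj (u v : G.V) : Prop :=
  ∃ e : G.E, (G.src e = u ∧ G.tgt e = v) ∨ (G.src e = v ∧ G.tgt e = u)

/-- `G` is simple: no loops and no parallel edges. -/
def IsSimple : Prop :=
  (∀ e : G.E, G.src e ≠ G.tgt e) ∧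
    ∀ e f : G.E,
      ((G.src e = G.src f ∧ G.tgt e = G.tgt f) ∨ (G.src e = G.tgt f ∧ G.tgt e = G.src f)) →
        e = f

end Multigraph

/-- `G ∈ 𝒢_{n,m}`: connected with `n` vertices and `m` edges. -/
def memG (G : Multigraph) (n m : ℕ) : Prop :=
  G.nV = n ∧ G.nE = m ∧ G.Connected

/-- Isomorphism of multigraphs. -/
structure MGIso (G H : Multigraph) where
  vMap : G.V ≃ H.V
  eMap : G.E ≃ H.E
  ends_eq : ∀ e : G.E,
    (H.src (eMap e) = vMap (G.src e) ∧ H.tgt (eMap e) = vMap (G.tgt e)) ∨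
    (H.src (eMap e) = vMap (G.tgt e) ∧ H.tgt (eMap e) = vMap (G.src e))

def IsIso (G H : Multigraph) : Prop := Nonempty (MGIso G H)

/-- `G` is `p`-optimal in `𝒢_{n,m}`. -/
def pOptimal (G : Multigraph) (n m : ℕ) (p : ℝ) : Prop :=
  memG G n m ∧ ∀ H : Multigraph, memG H n m → H.rel p ≤ G.rel p

/-- `G` is uniquely optimal in `𝒢_{n,m}`: strictly more reliable than every
non-isomorphic member, for every `p ∈ (0,1)`. -/
def UniquelyOptimal (G : Multigraph) (n m : ℕ) : Prop :=
  memG G n m ∧ ∀ H : Multigraph, memG H n m → ¬ IsIso G H →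
    ∀ p : ℝ, 0 < p → p < 1 → H.rel p < G.rel p

noncomputable instance quotFintype {α : Type} [Fintype α] {r : α → α → Prop} :
    Fintype (Quot r) :=
  letI := Classical.decEq (Quot r)
  Fintype.ofSurjective (Quot.mk r) fun q => Quot.exists_rep q

/-- Identification of the endpoints of zero-weight edges. -/
def zeroRel (D : Multigraph) (w : D.E → ℕ) : D.V → D.V → Prop :=
  fun u v => ∃ e : D.E, w e = 0 ∧ D.src e = u ∧ D.tgt e = v

/-- The `j`-th node along the chain replacing the edge `e` (whose chain has `w e` edges). -/
def chainNode (D : Multigraph) (w : D.E → ℕ) (e : D.E) (j : ℕ) :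
    Quot (zeroRel D w) ⊕ (Σ f : D.E, Fin (w f - 1)) :=
  if h : 0 < j ∧ j < w e then Sum.inr ⟨e, ⟨j - 1, by omega⟩⟩
  else if j = 0 then Sum.inl (Quot.mk _ (D.src e))
  else Sum.inl (Quot.mk _ (D.tgt e))

/-- The weak subdivision of `D` determined by the chain lengths `w`: each edge `e` is
replaced by a chain with `w e` edges; zero-weight edges are contracted. -/
def subdivide (D : Multigraph) (w : D.E → ℕ) : Multigraph where
  V := Quot (zeroRel D w) ⊕ (Σ f : D.E, Fin (w f - 1))
  E := Σ f : D.E, Fin (w f)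
  src f := chainNode D w f.1 f.2.val
  tgt f := chainNode D w f.1 (f.2.val + 1)

/-- The zero-weight edges contain no cycle (no "zero cycle"): they form a forest. -/
def ZeroAcyclic (D : Multigraph) (w : D.E → ℕ) : Prop :=
  Fintype.card (Quot (zeroRel D w)) +
      (Finset.univ.filter fun e : D.E => w e = 0).card = Fintype.card D.V

/-- `G` is a weak subdivision of `D` with chain lengths `w`. -/
def IsWeakSubdivision (G D : Multigraph) (w : D.E → ℕ) : Prop :=
  ZeroAcyclic D w ∧ IsIso G (subdivide D w)

/-- `D` is a weak distillation of `G`. -/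
def IsWeakDistillation (D G : Multigraph) : Prop :=
  ∃ w : D.E → ℕ, IsWeakSubdivision G D w

/-- The chain lengths differ pairwise by at most one. -/
def BalancedWeights {E : Type} (w : E → ℕ) : Prop := ∀ e f : E, w e ≤ w f + 1

/-- `D ∈ 𝒟_k`: connected, cubic, 3-edge-connected, of exceedance `k`. -/
def memDk (k : ℕ) (D : Multigraph) : Prop :=
  D.Connected ∧ (∀ v : D.V, D.deg v = 3) ∧
    (∀ F : Finset D.E, D.Disconnects F → 3 ≤ F.card) ∧ D.nE = D.nV + k

/-- Identification of the two endpoints of the edge `e`. -/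
def contractRel (G : Multigraph) (e : G.E) : G.V → G.V → Prop :=
  fun u v => u = G.src e ∧ v = G.tgt e

/-- Contraction of the edge `e`. -/
def Multigraph.contract (G : Multigraph) (e : G.E) : Multigraph :=
  letI := Classical.decEq G.E
  { V := Quot (contractRel G e)
    E := {f : G.E // f ≠ e}
    src := fun f => Quot.mk _ (G.src f.1)
    tgt := fun f => Quot.mk _ (G.tgt f.1) }

/-- `G'` is obtained from `G` by shifting an edge: in an intermediate graph `H`
(the expansion of `G` at a vertex by the new edge `e'`), the edges `e, e'` form a
2-bond; contracting `e'` gives back `G`, while contracting `e` gives `G'`. -/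
def IsShiftOf (G G' : Multigraph) : Prop :=
  ∃ (H : Multigraph) (e e' : H.E), e ≠ e' ∧
    H.src e ≠ H.tgt e ∧ H.src e' ≠ H.tgt e' ∧
    H.IsBond {e, e'} ∧
    IsIso (H.contract e') G ∧ IsIso (H.contract e) G'

/-- Equivalence of graphs: repeated edge shifting. -/
def EquivalentGraphs (G G' : Multigraph) : Prop :=
  Relation.ReflTransGen IsShiftOf G G'

/-- `G'` is obtained from `G` by moving the (non-loop) edge `e`: contracting `e` and
expanding a new edge, identified with `e` via `φ`, at an arbitrary vertex.
Equivalently, `G/e` and `G'/φ e` agree, compatibly with the edge identification `φ`. -/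
def MovedEdge (G G' : Multigraph) (φ : G.E ≃ G'.E) (e : G.E) : Prop :=
  G.src e ≠ G.tgt e ∧ G'.src (φ e) ≠ G'.tgt (φ e) ∧
  ∃ ψ : Quot (contractRel G e) ≃ Quot (contractRel G' (φ e)),
    ∀ f : G.E, f ≠ e →
      ((ψ (Quot.mk _ (G.src f)) = Quot.mk _ (G'.src (φ f)) ∧
        ψ (Quot.mk _ (G.tgt f)) = Quot.mk _ (G'.tgt (φ f))) ∨
       (ψ (Quot.mk _ (G.src f)) = Quot.mk _ (G'.tgt (φ f)) ∧
        ψ (Quot.mk _ (G.tgt f)) = Quot.mk _ (G'.src (φ f))))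

/-- Move one edge from the chain `a` to the chain `b`. -/
def moveWeight {E : Type} (w : E → ℕ) (a b : E) : E → ℕ :=
  fun g => if g = b then w b + 1 else if g = a then w a - 1 else w g

/-- The chains of maximal length. -/
def maxChains (D : Multigraph) (w : D.E → ℕ) : Finset D.E :=
  Finset.univ.filter fun e => ∀ f : D.E, w f ≤ w e

/-- The chains of minimal length. -/
def minChains (D : Multigraph) (w : D.E → ℕ) : Finset D.E :=
  Finset.univ.filter fun e => ∀ f : D.E, w e ≤ w f

/-- Degree of `v` within the edge set `S`. -/
def degIn (D : Multigraph) (S : Finset D.E) (v : D.V) : ℕ :=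
  (S.filter fun e => D.src e = v).card + (S.filter fun e => D.tgt e = v).card

/-- `S` is a matching (pairwise non-adjacent edges). -/
def IsMatchingIn (D : Multigraph) (S : Finset D.E) : Prop := ∀ v : D.V, degIn D S v ≤ 1

/-- `S` is a path with three edges. -/
def IsPath3In (D : Multigraph) (S : Finset D.E) : Prop :=
  S.card = 3 ∧ (∀ v : D.V, degIn D S v ≤ 2) ∧
    (Finset.univ.filter fun v : D.V => degIn D S v = 1).card = 2

/-- `S` is the disjoint union of a path with three edges and a single edge. -/
def IsPath3PlusEdgeIn (D : Multigraph) (S : Finset D.E) : Prop :=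
  S.card = 4 ∧ (∀ v : D.V, degIn D S v ≤ 2) ∧
    (Finset.univ.filter fun v : D.V => degIn D S v = 1).card = 4 ∧
    ∃ e ∈ S, degIn D S (D.src e) = 2 ∧ degIn D S (D.tgt e) = 2

/-- `S` is the disjoint union of two paths with two edges each. -/
def IsTwoPlusTwoIn (D : Multigraph) (S : Finset D.E) : Prop :=
  S.card = 4 ∧ (∀ v : D.V, degIn D S v ≤ 2) ∧
    (Finset.univ.filter fun v : D.V => degIn D S v = 1).card = 4 ∧
    ∀ e ∈ S, degIn D S (D.src e) = 1 ∨ degIn D S (D.tgt e) = 1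

/-- Two edges sharing a vertex. -/
def AdjEdges (D : Multigraph) (a b : D.E) : Prop :=
  ∃ v : D.V, (D.src a = v ∨ D.tgt a = v) ∧ (D.src b = v ∨ D.tgt b = v)

/-- The number of incidences of edges of weight `c` at the vertex `u`. -/
def incCount (D : Multigraph) (w : D.E → ℕ) (u : D.V) (c : ℕ) : ℕ :=
  (Finset.univ.filter fun e : D.E => D.src e = u ∧ w e = c).card +
    (Finset.univ.filter fun e : D.E => D.tgt e = u ∧ w e = c).card

/-- The `π^v`-value of the vertex `u`: the number of incident edges of weight `q + 1`
minus the number of incident edges of weight `q - 1`. -/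
def piV (D : Multigraph) (w : D.E → ℕ) (q : ℕ) (u : D.V) : ℤ :=
  (incCount D w u (q + 1) : ℤ) -
    (if q = 0 then 0 else (incCount D w u (q - 1) : ℤ))

/-- The `π^v`-values are balanced: pairwise differences at most one. -/
def BalancedPiV (D : Multigraph) (w : D.E → ℕ) (q : ℕ) : Prop :=
  ∀ u v : D.V, piV D w q u ≤ piV D w q v + 1

/-- The standard weight `q`, where `m = 3kq + r` with `-3k/2 < r ≤ 3k/2`. -/
def stdWeight (m k : ℕ) : ℕ := (2 * m + 3 * k - 1) / (6 * k)

/-- `w` is a balanced weighting of `D` of total size `m` (the implied weak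
subdivision is the generic member of `ℬ_m(D)`). -/
def IsBalancedWeighting (D : Multigraph) (w : D.E → ℕ) (m : ℕ) : Prop :=
  (∑ e : D.E, w e) = m ∧ BalancedWeights w ∧ ZeroAcyclic D w

/-- Every 3-bond of `D` is trivial (consists of the three edges at a single vertex). -/
def OnlyTrivialThreeBonds (D : Multigraph) : Prop :=
  ∀ F : Finset D.E, D.IsBond F → F.card = 3 →
    ∃ u : D.V, F = Finset.univ.filter fun e => D.src e = u ∨ D.tgt e = u

/-- The 3-dipole: two vertices joined by three parallel edges. -/
def dipole3 : Multigraph where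
  V := Fin 2
  E := Fin 3
  src _ := 0
  tgt _ := 1

/-- The complete graph `K₄`. -/
def K4 : Multigraph where
  V := Fin 4
  E := {p : Fin 4 × Fin 4 // p.1 < p.2}
  src p := p.1.1
  tgt p := p.1.2

/-- The complete bipartite graph `K_{3,3}`. -/
def K33 : Multigraph where
  V := Fin 3 ⊕ Fin 3
  E := Fin 3 × Fin 3
  src p := Sum.inl p.1
  tgt p := Sum.inr p.2

/-- The triangular prism `Π₃`; the edges `Sum.inr i` are the rungs. -/
def prism : Multigraph where
  V := Fin 3 × Bool
  E := (Fin 3 × Bool) ⊕ Fin 3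
  src := fun e => match e with
    | Sum.inl (i, b) => (i, b)
    | Sum.inr i => (i, false)
  tgt := fun e => match e with
    | Sum.inl (i, b) => (i + 1, b)
    | Sum.inr i => (i, true)

/-- The Wagner graph (the 4-Möbius ladder): the edges `Sum.inl i` are the rails
(the 8-cycle) and the edges `Sum.inr j` are the rungs. -/
def wagner : Multigraph where
  V := Fin 8
  E := Fin 8 ⊕ Fin 4
  src := fun e => match e with
    | Sum.inl i => i
    | Sum.inr j => ⟨j.val, by omega⟩
  tgt := fun e => match e with
    | Sum.inl i => i + 1
    | Sum.inr j => ⟨j.val + 4, by omega⟩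

/-- The Petersen graph. -/
def petersen : Multigraph where
  V := Fin 5 × Bool
  E := Fin 5 ⊕ Fin 5 ⊕ Fin 5
  src := fun e => match e with
    | Sum.inl i => (i, false)
    | Sum.inr (Sum.inl i) => (i, false)
    | Sum.inr (Sum.inr i) => (i, true)
  tgt := fun e => match e with
    | Sum.inl i => (i + 1, false)
    | Sum.inr (Sum.inl i) => (i, true)
    | Sum.inr (Sum.inr i) => (i + 2, true)

/-!
Every weak distillation is a contraction: if `G` is a weak subdivision of `D` with chain lengths at
most `1`, then `G` is `D` with the edges of length zero contracted. Conversely, a `3`-edge-connected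
graph of exceedance `k` is a contraction of a graph in `𝒟_k`: as long as a vertex `v` has degree at
least `4`, submodularity of cuts yields two edges at `v` that lie on no common `3`-cut, and
splitting them off preserves `3`-edge-connectivity.

(a) If there is a trivial `2`-cut, there is a vertex of degree `2`; suppress it, and restore it in
the weak subdivision by lengthening a chain.

(b) If `{e, f}` is any `2`-cut of `G`, contracting `e` and subdividing `f` is a shift. By induction
`G/e` is equivalent to some `K` with a weak distillation in `𝒟_k`, and the shifts from `G/e` to `K`
lift to the subdivisions.

(c) Shifts preserve both `3`-edge-connectivity and the class of proper subdivisions of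
`3`-edge-connected cubic graphs, which is characterised by `2`-edge-connectivity, maximum degree at
most `3` and triviality of the `2`-cuts. If no chain of `G†` has length zero then `G†`, hence `G`,
is in the second class; if some chain has length zero and `G†` is balanced, then all chain lengths
are at most `1`, so that `G†`, hence `G`, is in the first class. In both cases `G` has a weak
distillation in `𝒟_k`.
-/

namespace Multigraph

variable {G : Multigraph}

/-- The unordered pair of endpoints of an edge; edges are regarded as undirected, so every
comparison of graphs below goes through `ends` rather than `src` and `tgt`. -/
def ends (G : Multigraph) (e : G.E) : Sym2 G.V := s(G.src e, G.tgt e)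

theorem mem_cutEdges {A : Finset G.V} {e : G.E} :
    e ∈ G.cutEdges A ↔ ¬ (G.src e ∈ A ↔ G.tgt e ∈ A) := by
  simp only [cutEdges, mem_filter, mem_univ, true_and]; tauto

theorem mem_cutEdges_of_ends_eq {A : Finset G.V} {e : G.E} {u v : G.V} (h : G.ends e = s(u, v)) :
    e ∈ G.cutEdges A ↔ ¬ (u ∈ A ↔ v ∈ A) := by
  rw [mem_cutEdges]
  rcases Sym2.eq_iff.1 h with ⟨rfl, rfl⟩ | ⟨rfl, rfl⟩ <;> tauto

theorem src_ne_tgt_of_mem_cutEdges {A : Finset G.V} {e : G.E} (h : e ∈ G.cutEdges A) :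
    G.src e ≠ G.tgt e := fun hl => mem_cutEdges.1 h (by rw [hl])

theorem nonempty_and_ne_univ_of_mem_cutEdges {A : Finset G.V} {e : G.E} (h : e ∈ G.cutEdges A) :
    A.Nonempty ∧ A ≠ univ := by
  rw [mem_cutEdges] at h
  refine ⟨nonempty_iff_ne_empty.2 ?_, ?_⟩ <;> rintro rfl <;> simp at h

theorem cutEdges_compl (A : Finset G.V) : G.cutEdges Aᶜ = G.cutEdges A := by
  ext e; simp only [mem_cutEdges, mem_compl]; tauto

theorem cutEdges_symmDiff (A B : Finset G.V) :
    G.cutEdges (symmDiff A B) = symmDiff (G.cutEdges A) (G.cutEdges B) := by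
  ext e; simp only [mem_cutEdges, mem_symmDiff]; tauto

theorem card_cutEdges_inter_add_card_cutEdges_union_le (A B : Finset G.V) :
    (G.cutEdges (A ∩ B)).card + (G.cutEdges (A ∪ B)).card ≤
      (G.cutEdges A).card + (G.cutEdges B).card := by
  simp only [cutEdges, card_filter, ← Finset.sum_add_distrib]
  refine Finset.sum_le_sum fun e _ => ?_
  by_cases h1 : G.src e ∈ A <;> by_cases h2 : G.src e ∈ B <;>
    by_cases h3 : G.tgt e ∈ A <;> by_cases h4 : G.tgt e ∈ B <;> simp [h1, h2, h3, h4]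

theorem connOn_iff_exists_mem_cutEdges {S : Finset G.E} :
    G.ConnOn S ↔ ∀ A : Finset G.V, A.Nonempty → A ≠ univ → ∃ e ∈ S, e ∈ G.cutEdges A := by
  constructor
  · rintro h A ⟨u, hu⟩ hA
    by_contra! hS
    refine hA (eq_univ_of_forall fun v => ?_)
    induction h u v with
    | refl => exact hu
    | tail _ hstep ih =>
      obtain ⟨e, heS, he⟩ := hstep
      have := hS e heS
      rw [mem_cutEdges] at this
      rcases he with ⟨rfl, rfl⟩ | ⟨rfl, rfl⟩ <;> tauto
  · intro h u v
    let reach : Finset G.V := univ.filter fun x => Relation.ReflTransGen (G.stepOn S) u x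
    have mem_reach {x} : x ∈ reach ↔ Relation.ReflTransGen (G.stepOn S) u x := by simp [reach]
    by_contra hv
    obtain ⟨e, heS, he⟩ := h reach ⟨u, mem_reach.2 .refl⟩
      fun huniv => hv (mem_reach.1 (huniv ▸ mem_univ v))
    rw [mem_cutEdges, mem_reach, mem_reach] at he
    exact he ⟨fun hs => hs.tail ⟨e, heS, .inl ⟨rfl, rfl⟩⟩,
      fun ht => ht.tail ⟨e, heS, .inr ⟨rfl, rfl⟩⟩⟩

theorem disconnects_iff_exists_cutEdges_subset {F : Finset G.E} :
    G.Disconnects F ↔ ∃ A : Finset G.V, A.Nonempty ∧ A ≠ univ ∧ G.cutEdges A ⊆ F := by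
  simp only [Disconnects, connOn_iff_exists_mem_cutEdges, mem_sdiff, mem_univ, true_and]
  push Not
  simp only [Finset.subset_iff, not_imp_not]

/-- `G` is `j`-edge-connected: every nontrivial vertex bipartition is crossed by at least `j`
edges. -/
def IsEdgeConnected (G : Multigraph) (j : ℕ) : Prop :=
  ∀ A : Finset G.V, A.Nonempty → A ≠ univ → j ≤ (G.cutEdges A).card

theorem IsEdgeConnected.mono {i j : ℕ} (hij : i ≤ j) (h : G.IsEdgeConnected j) :
    G.IsEdgeConnected i :=
  fun A hA hA' => hij.trans (h A hA hA')

theorem IsEdgeConnected.le_card_cutEdges {j : ℕ} (h : G.IsEdgeConnected j) {A : Finset G.V}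
    {e : G.E} (he : e ∈ G.cutEdges A) : j ≤ (G.cutEdges A).card :=
  h A (nonempty_and_ne_univ_of_mem_cutEdges he).1 (nonempty_and_ne_univ_of_mem_cutEdges he).2

theorem isEdgeConnected_iff_forall_disconnects {j : ℕ} :
    G.IsEdgeConnected j ↔ ∀ F : Finset G.E, G.Disconnects F → j ≤ F.card := by
  simp only [disconnects_iff_exists_cutEdges_subset]
  constructor
  · rintro h F ⟨A, hA, hA', hAF⟩
    exact (h A hA hA').trans (card_le_card hAF)
  · exact fun h A hA hA' => h _ ⟨A, hA, hA', Subset.rfl⟩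

theorem IsEdgeConnected.connected (h : G.IsEdgeConnected 1) : G.Connected :=
  connOn_iff_exists_mem_cutEdges.2 fun A hA hA' =>
    (card_pos.1 (h A hA hA')).imp fun e he => ⟨mem_univ e, he⟩

theorem isEdgeConnected_two (hconn : G.Connected) (hbridge : G.Bridgeless) :
    G.IsEdgeConnected 2 := by
  intro A hA hA'
  by_contra! hlt
  obtain ⟨e, -, he⟩ := connOn_iff_exists_mem_cutEdges.1 hconn A hA hA'
  refine hbridge e (disconnects_iff_exists_cutEdges_subset.2 ⟨A, hA, hA', fun f hf => ?_⟩)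
  exact mem_singleton.2 (card_le_one.1 (Nat.le_of_lt_succ hlt) f hf e he)

theorem IsEdgeConnected.isBond_cutEdges {j : ℕ} (h : G.IsEdgeConnected j) {A : Finset G.V}
    (hA : A.Nonempty) (hA' : A ≠ univ) (hcard : (G.cutEdges A).card = j) :
    G.IsBond (G.cutEdges A) := by
  refine ⟨⟨A, hA, hA', rfl⟩, ?_⟩
  rintro F hF ⟨B, hB, hB', rfl⟩
  exact eq_of_subset_of_card_le hF (hcard.trans_le (h B hB hB'))

/-- Every cut with two edges bounds a set of degree-`2` vertices, i.e. its two edges lie on a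
common chain. For a `2`-edge-connected graph this is the triviality of all `2`-bonds; the
nontriviality of the bipartition is automatic because the cut is nonempty. -/
def HasTrivialTwoCuts (G : Multigraph) : Prop :=
  ∀ A : Finset G.V, (G.cutEdges A).card = 2 →
    ∃ B : Finset G.V, G.cutEdges B = G.cutEdges A ∧ ∀ v ∈ B, G.deg v = 2

theorem nonempty_and_ne_univ_of_card_cutEdges {A : Finset G.V} (h : (G.cutEdges A).card = 2) :
    A.Nonempty ∧ A ≠ univ :=
  have ⟨_, he⟩ := card_pos.1 (h ▸ two_pos)
  nonempty_and_ne_univ_of_mem_cutEdges he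

theorem IsEdgeConnected.hasTrivialTwoCuts_iff (h : G.IsEdgeConnected 2) :
    G.HasTrivialTwoCuts ↔ ∀ F : Finset G.E, G.IsBond F → F.card = 2 →
      ∃ A : Finset G.V, A.Nonempty ∧ A ≠ univ ∧ F = G.cutEdges A ∧ ∀ v ∈ A, G.deg v = 2 := by
  constructor
  · rintro ht F ⟨⟨A, -, -, rfl⟩, -⟩ hF
    obtain ⟨B, hB, hdeg⟩ := ht A hF
    have ⟨hne, hne'⟩ := nonempty_and_ne_univ_of_card_cutEdges (hB ▸ hF)
    exact ⟨B, hne, hne', hB.symm, hdeg⟩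
  · intro ht A hA
    have ⟨hne, hne'⟩ := nonempty_and_ne_univ_of_card_cutEdges hA
    obtain ⟨B, -, -, hB, hdeg⟩ := ht _ (h.isBond_cutEdges hne hne' hA) hA
    exact ⟨B, hB.symm, hdeg⟩

theorem sum_deg_eq_two_mul_nE (G : Multigraph) : ∑ v, G.deg v = 2 * G.nE := by
  simp only [deg, Finset.sum_add_distrib]
  rw [← card_eq_sum_card_fiberwise (f := G.src) (s := univ) (t := univ) (by simp),
    ← card_eq_sum_card_fiberwise (f := G.tgt) (s := univ) (t := univ) (by simp), nE, card_univ,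
    two_mul]

theorem deg_eq_sum (G : Multigraph) (v : G.V) :
    G.deg v = ∑ e, ((if G.src e = v then 1 else 0) + if G.tgt e = v then 1 else 0) := by
  simp only [deg, card_filter, Finset.sum_add_distrib]

theorem card_cutEdges_singleton_le_deg (G : Multigraph) (v : G.V) :
    (G.cutEdges {v}).card ≤ G.deg v := by
  refine (card_le_card fun e he => ?_).trans (card_union_le _ _)
  simp only [mem_cutEdges, mem_singleton, mem_union, mem_filter, mem_univ, true_and] at he ⊢
  tauto

theorem IsEdgeConnected.le_deg [Nontrivial G.V] {j : ℕ} (h : G.IsEdgeConnected j) (v : G.V) :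
    j ≤ G.deg v :=
  (h {v} (singleton_nonempty v) (singleton_ne_univ v)).trans (G.card_cutEdges_singleton_le_deg v)

end Multigraph

/-- `X` arises from `H` by contracting the edge set `R`, up to isomorphism: `vMap` sends a vertex
of `H` to its image, `eMap` sends an edge of `X` to the edge of `H` it comes from. That two
vertices are only identified when joined by edges of `R` is expressed by `mem_iff`: every vertex
set crossed by no edge of `R` is a union of fibres of `vMap`. Cycles in `R` are allowed. -/
structure Contraction (H : Multigraph) (R : Set H.E) (X : Multigraph) where
  vMap : H.V → X.V
  eMap : X.E → H.E
  vMap_surjective : Function.Surjective vMap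
  eMap_injective : Function.Injective eMap
  range_eMap : Set.range eMap = Rᶜ
  vMap_src_eq_tgt : ∀ g ∈ R, vMap (H.src g) = vMap (H.tgt g)
  mem_iff : ∀ S : Set H.V, (∀ g ∈ R, H.src g ∈ S ↔ H.tgt g ∈ S) →
    ∀ u v, vMap u = vMap v → (u ∈ S ↔ v ∈ S)
  map_ends : ∀ x, (H.ends (eMap x)).map vMap = X.ends x

namespace MGIso

variable {G H : Multigraph}

theorem ends_eMap (i : MGIso G H) (e : G.E) : H.ends (i.eMap e) = (G.ends e).map i.vMap := by
  simpa only [Multigraph.ends, Sym2.map_mk, Sym2.eq_iff] using i.ends_eq e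

/-- The inverse of an isomorphism. -/
def symm (i : MGIso G H) : MGIso H G where
  vMap := i.vMap.symm
  eMap := i.eMap.symm
  ends_eq e := by
    have h := i.ends_eq (i.eMap.symm e)
    rw [i.eMap.apply_symm_apply] at h
    rcases h with ⟨hs, ht⟩ | ⟨hs, ht⟩ <;> simp [hs, ht]

end MGIso

namespace Multigraph

variable {G H K : Multigraph}

theorem isIso_of_bijective {p : G.V → H.V} {r : H.E → G.E} (hp : Function.Bijective p)
    (hr : Function.Bijective r) (hends : ∀ e, (G.ends (r e)).map p = H.ends e) : IsIso G H := by
  refine ⟨MGIso.symm ⟨(Equiv.ofBijective p hp).symm, Equiv.ofBijective r hr, fun e => ?_⟩⟩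
  simp only [Equiv.ofBijective_apply, Equiv.eq_symm_apply]
  simpa only [ends, Sym2.map_mk, Sym2.eq_iff] using hends e

theorem isIso_of_surjective {p : G.V → H.V} {r : H.E → G.E} (hp : Function.Surjective p)
    (hr : Function.Surjective r) (hV : G.nV = H.nV) (hE : G.nE = H.nE)
    (hends : ∀ e, (G.ends (r e)).map p = H.ends e) : IsIso G H :=
  isIso_of_bijective ((Fintype.bijective_iff_surjective_and_card p).2 ⟨hp, hV⟩)
    ((Fintype.bijective_iff_surjective_and_card r).2 ⟨hr, hE.symm⟩) hends

end Multigraph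

namespace Contraction

variable {H X Y : Multigraph} {R : Set H.E}

theorem eMap_notMem (c : Contraction H R X) (x : X.E) : c.eMap x ∉ R :=
  c.range_eMap.subset (Set.mem_range_self x)

theorem exists_eMap_eq (c : Contraction H R X) {g : H.E} (hg : g ∉ R) : ∃ x, c.eMap x = g :=
  c.range_eMap.superset hg

/-- The trivial contraction. -/
def refl (H : Multigraph) : Contraction H ∅ H where
  vMap := id
  eMap := id
  vMap_surjective := Function.surjective_id
  eMap_injective := Function.injective_id
  range_eMap := by simp
  vMap_src_eq_tgt := by simp
  mem_iff := by rintro S - u v rfl; rfl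
  map_ends := by simp

/-- An isomorphism is a contraction of no edge. -/
def ofIso (i : MGIso X Y) : Contraction X ∅ Y where
  vMap := i.vMap
  eMap := i.eMap.symm
  vMap_surjective := i.vMap.surjective
  eMap_injective := i.eMap.symm.injective
  range_eMap := by simp
  vMap_src_eq_tgt := by simp
  mem_iff := by rintro S - u v huv; rw [i.vMap.injective huv]
  map_ends x := by rw [← i.ends_eMap, i.eMap.apply_symm_apply]

/-- Rewriting the set of contracted edges. -/
def congr (c : Contraction H R X) {R' : Set H.E} (h : R = R') : Contraction H R' X where
  __ := c
  range_eMap := h ▸ c.range_eMap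
  vMap_src_eq_tgt := h ▸ c.vMap_src_eq_tgt
  mem_iff := h ▸ c.mem_iff

theorem vMap_mem_image_iff (c : Contraction H R X) {S : Set H.V}
    (hS : ∀ g ∈ R, H.src g ∈ S ↔ H.tgt g ∈ S) {u : H.V} : c.vMap u ∈ c.vMap '' S ↔ u ∈ S :=
  ⟨fun ⟨v, hv, hvu⟩ => (c.mem_iff S hS v u hvu).1 hv, Set.mem_image_of_mem _⟩

theorem ends_eq_or (c : Contraction H R X) (x : X.E) :
    X.src x = c.vMap (H.src (c.eMap x)) ∧ X.tgt x = c.vMap (H.tgt (c.eMap x)) ∨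
      X.src x = c.vMap (H.tgt (c.eMap x)) ∧ X.tgt x = c.vMap (H.src (c.eMap x)) := by
  have h := (c.map_ends x).symm
  rwa [Multigraph.ends, Multigraph.ends, Sym2.map_mk, Sym2.eq_iff] at h

/-- Contracting first `R` and then `T`. -/
def comp {T : Set X.E} (d : Contraction X T Y) (c : Contraction H R X) :
    Contraction H (R ∪ c.eMap '' T) Y where
  vMap := d.vMap ∘ c.vMap
  eMap := c.eMap ∘ d.eMap
  vMap_surjective := d.vMap_surjective.comp c.vMap_surjective
  eMap_injective := c.eMap_injective.comp d.eMap_injective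
  range_eMap := by
    rw [Set.range_comp, d.range_eMap, Set.image_compl_eq_range_sdiff_image c.eMap_injective,
      c.range_eMap, Set.compl_union, Set.sdiff_eq]
  vMap_src_eq_tgt := by
    rintro g (hg | ⟨x, hx, rfl⟩)
    · exact congrArg d.vMap (c.vMap_src_eq_tgt g hg)
    · have h := d.vMap_src_eq_tgt x hx
      rcases c.ends_eq_or x with ⟨hs, ht⟩ | ⟨hs, ht⟩ <;> rw [hs, ht] at h
      exacts [h, h.symm]
  mem_iff := by
    intro S hS u v huv
    have mem_image {u} := c.vMap_mem_image_iff (u := u) fun g hg => hS g (.inl hg)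
    rw [← mem_image, ← mem_image]
    refine d.mem_iff _ (fun x hx => ?_) _ _ huv
    have h := hS _ (.inr ⟨x, hx, rfl⟩)
    rcases c.ends_eq_or x with ⟨hs, ht⟩ | ⟨hs, ht⟩ <;> rw [hs, ht, mem_image, mem_image]
    exacts [h, h.symm]
  map_ends x := by
    rw [← d.map_ends, ← c.map_ends, Sym2.map_map]; rfl

/-- A contraction followed by an isomorphism. -/
def compIso (d : Contraction X ∅ Y) (c : Contraction H R X) : Contraction H R Y :=
  (d.comp c).congr (by simp)

theorem vMap_eq_of_subset (c : Contraction H R X) {R' : Set H.E} (d : Contraction H R' Y)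
    (hR : R ⊆ R') {u v : H.V} (h : c.vMap u = c.vMap v) : d.vMap u = d.vMap v :=
  ((c.mem_iff {x | d.vMap x = d.vMap u}
    (fun g hg => by simp only [Set.mem_ofPred_eq, d.vMap_src_eq_tgt g (hR hg)]) u v h).1 rfl).symm

theorem exists_factor (c : Contraction H R X) {R' : Set H.E} (d : Contraction H R' Y)
    (hR : R ⊆ R') : ∃ f : Contraction X (c.eMap ⁻¹' R') Y,
      (∀ u, f.vMap (c.vMap u) = d.vMap u) ∧ ∀ y, c.eMap (f.eMap y) = d.eMap y := by
  choose r hr using fun y => c.exists_eMap_eq fun h => d.eMap_notMem y (hR h)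
  let p : X.V → Y.V := d.vMap ∘ Function.surjInv c.vMap_surjective
  have hp u : p (c.vMap u) = d.vMap u :=
    c.vMap_eq_of_subset d hR (Function.surjInv_eq c.vMap_surjective _)
  refine ⟨⟨p, r, ?vMap_surjective, ?eMap_injective, ?range_eMap, ?vMap_src_eq_tgt, ?mem_iff,
    ?map_ends⟩, hp, hr⟩
  case vMap_surjective => exact fun y => (d.vMap_surjective y).elim fun u hu => ⟨_, (hp u).trans hu⟩
  case eMap_injective =>
    exact fun y z h => d.eMap_injective (by rw [← hr, ← hr, h])
  case range_eMap =>
    ext x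
    rw [Set.mem_compl_iff, Set.mem_preimage, ← Set.mem_compl_iff, ← d.range_eMap]
    exact exists_congr fun y => by rw [← hr, c.eMap_injective.eq_iff]
  case vMap_src_eq_tgt =>
    intro x hx
    have h := d.vMap_src_eq_tgt _ hx
    rcases c.ends_eq_or x with ⟨hs, ht⟩ | ⟨hs, ht⟩ <;> rw [hs, ht, hp, hp, h]
  case mem_iff =>
    intro S hS x y hxy
    obtain ⟨u, rfl⟩ := c.vMap_surjective x
    obtain ⟨v, rfl⟩ := c.vMap_surjective y
    rw [hp, hp] at hxy
    refine d.mem_iff (c.vMap ⁻¹' S) (fun g hg => ?_) u v hxy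
    by_cases hgR : g ∈ R
    · simp only [Set.mem_preimage, c.vMap_src_eq_tgt g hgR]
    · obtain ⟨x, rfl⟩ := c.exists_eMap_eq hgR
      have h := hS x hg
      rcases c.ends_eq_or x with ⟨hs, ht⟩ | ⟨hs, ht⟩ <;> rw [hs, ht] at h
      exacts [h, h.symm]
  case map_ends =>
    intro y
    rw [← d.map_ends, ← hr, ← c.map_ends, Sym2.map_map]
    exact congrArg (fun q => Sym2.map q _) (funext hp)

theorem isIso (c : Contraction X ∅ Y) : IsIso X Y := by
  refine Multigraph.isIso_of_bijective ⟨fun u v h => ?_, c.vMap_surjective⟩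
    ⟨c.eMap_injective, Set.range_eq_univ.1 (by simp [c.range_eMap])⟩ c.map_ends
  exact ((c.mem_iff {u} (by simp) u v h).1 rfl).symm

theorem isIso_of_contraction (c : Contraction H R X) (d : Contraction H R Y) : IsIso X Y := by
  obtain ⟨f, -⟩ := c.exists_factor d subset_rfl
  exact (f.congr (by ext x; simpa using c.eMap_notMem x)).isIso

end Contraction

namespace IsIso

variable {G H K : Multigraph}

theorem symm (h : IsIso G H) : IsIso H G := h.map MGIso.symm

theorem nonempty_contraction (h : IsIso G H) : Nonempty (Contraction G ∅ H) :=
  h.map Contraction.ofIso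

theorem trans (h : IsIso G H) (h' : IsIso H K) : IsIso G K := by
  obtain ⟨c⟩ := h.nonempty_contraction
  obtain ⟨d⟩ := h'.nonempty_contraction
  exact (d.compIso c).isIso

end IsIso

namespace Contraction

variable {H X : Multigraph}

/-- The contraction of a single edge, as given by `Multigraph.contract`. -/
def contract (H : Multigraph) (e : H.E) : Contraction H {e} (H.contract e) where
  vMap := Quot.mk _
  eMap := Subtype.val
  vMap_surjective := Quot.mk_surjective
  eMap_injective := Subtype.val_injective
  range_eMap := Subtype.range_val
  vMap_src_eq_tgt := by rintro g rfl; exact Quot.sound ⟨rfl, rfl⟩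
  mem_iff S hS u v huv := by
    have hlift : ∀ a b, contractRel H e a b → (a ∈ S) = (b ∈ S) := by
      rintro a b ⟨rfl, rfl⟩; exact propext (hS e rfl)
    exact iff_of_eq (congrArg (Quot.lift (· ∈ S) hlift) huv)
  map_ends _ := rfl

theorem isIso_contract_iff {e : H.E} :
    IsIso (H.contract e) X ↔ Nonempty (Contraction H {e} X) :=
  ⟨fun h => h.nonempty_contraction.map fun d => d.compIso (contract H e),
    fun ⟨c⟩ => (contract H e).isIso_of_contraction c⟩

end Contraction

namespace Contraction

variable {H X : Multigraph} {R : Set H.E}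

section Cuts

/-- The vertices mapped into `B`. -/
def preimage (c : Contraction H R X) (B : Finset X.V) : Finset H.V :=
  univ.filter fun u => c.vMap u ∈ B

@[simp] theorem mem_preimage {c : Contraction H R X} {B : Finset X.V} {u : H.V} :
    u ∈ c.preimage B ↔ c.vMap u ∈ B := by
  simp [preimage]

theorem eMap_mem_cutEdges_preimage (c : Contraction H R X) {B : Finset X.V} {x : X.E} :
    c.eMap x ∈ H.cutEdges (c.preimage B) ↔ x ∈ X.cutEdges B := by
  rw [Multigraph.mem_cutEdges_of_ends_eq (c.map_ends x).symm, Multigraph.mem_cutEdges, mem_preimage,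
    mem_preimage]

theorem cutEdges_preimage (c : Contraction H R X) (B : Finset X.V) :
    H.cutEdges (c.preimage B) = (X.cutEdges B).image c.eMap := by
  ext g
  by_cases hg : g ∈ R
  · have hnot : g ∉ H.cutEdges (c.preimage B) := by
      rw [Multigraph.mem_cutEdges, mem_preimage, mem_preimage, c.vMap_src_eq_tgt g hg]
      exact not_not.2 Iff.rfl
    simp only [hnot, mem_image, false_iff]
    rintro ⟨x, -, rfl⟩
    exact c.eMap_notMem x hg
  · obtain ⟨x, rfl⟩ := c.exists_eMap_eq hg
    rw [c.eMap_injective.mem_finset_image, c.eMap_mem_cutEdges_preimage]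

theorem card_cutEdges_preimage (c : Contraction H R X) (B : Finset X.V) :
    (H.cutEdges (c.preimage B)).card = (X.cutEdges B).card := by
  rw [cutEdges_preimage, card_image_of_injective _ c.eMap_injective]

theorem exists_preimage_eq (c : Contraction H R X) {A : Finset H.V}
    (hA : ∀ g ∈ R, g ∉ H.cutEdges A) : ∃ B : Finset X.V, c.preimage B = A := by
  refine ⟨A.image c.vMap, ?_⟩
  ext u
  have := c.vMap_mem_image_iff (S := A) (u := u)
    fun g hg => not_not.1 (mt Multigraph.mem_cutEdges.2 (hA g hg))
  simpa using this

theorem preimage_nonempty_iff (c : Contraction H R X) {B : Finset X.V} :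
    (c.preimage B).Nonempty ↔ B.Nonempty := by
  simp only [Finset.Nonempty, mem_preimage, c.vMap_surjective.exists]

theorem preimage_eq_univ_iff (c : Contraction H R X) {B : Finset X.V} :
    c.preimage B = univ ↔ B = univ := by
  simp only [eq_univ_iff_forall, mem_preimage, c.vMap_surjective.forall]

theorem isEdgeConnected (c : Contraction H R X) {j : ℕ} (h : H.IsEdgeConnected j) :
    X.IsEdgeConnected j := fun B hB hB' => by
  rw [← c.card_cutEdges_preimage]
  exact h _ (c.preimage_nonempty_iff.2 hB) (c.preimage_eq_univ_iff.not.2 hB')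

theorem le_card_cutEdges (c : Contraction H R X) {j : ℕ} (h : X.IsEdgeConnected j)
    {A : Finset H.V} (hA : A.Nonempty) (hA' : A ≠ univ) (hR : ∀ g ∈ R, g ∉ H.cutEdges A) :
    j ≤ (H.cutEdges A).card := by
  obtain ⟨B, rfl⟩ := c.exists_preimage_eq hR
  rw [c.card_cutEdges_preimage]
  exact h B (c.preimage_nonempty_iff.1 hA) (c.preimage_eq_univ_iff.not.1 hA')

end Cuts

section Counting

theorem vMap_injective (c : Contraction H ∅ X) : Function.Injective c.vMap := fun u v huv =>
  ((c.mem_iff {u} (by simp) u v huv).1 rfl).symm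

theorem vMap_eq_iff {e : H.E} (c : Contraction H {e} X) {u v : H.V} :
    c.vMap u = c.vMap v ↔
      u = v ∨ (u = H.src e ∧ v = H.tgt e) ∨ (u = H.tgt e ∧ v = H.src e) := by
  constructor
  · intro h
    have hends := c.mem_iff {H.src e, H.tgt e} (by rintro g rfl; simp) u v h
    have hsingle := c.mem_iff {u}
    simp only [Set.mem_singleton_iff, forall_eq, Set.mem_insert_iff] at hends hsingle
    grind
  · rintro (rfl | ⟨rfl, rfl⟩ | ⟨rfl, rfl⟩)
    exacts [rfl, c.vMap_src_eq_tgt e rfl, (c.vMap_src_eq_tgt e rfl).symm]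

theorem nV_eq_add_one {e : H.E} (c : Contraction H {e} X) (he : H.src e ≠ H.tgt e) :
    H.nV = X.nV + 1 := by
  have himage : (univ.erase (H.src e)).image c.vMap = univ := by
    refine eq_univ_of_forall fun x => mem_image.2 ?_
    obtain ⟨u, rfl⟩ := c.vMap_surjective x
    by_cases hu : u = H.src e
    · exact ⟨H.tgt e, by simp [he.symm], by rw [hu, c.vMap_src_eq_tgt e rfl]⟩
    · exact ⟨u, by simp [hu], rfl⟩
  have hinj : Set.InjOn c.vMap (univ.erase (H.src e)) := fun u hu v hv huv => by
    simp only [mem_coe, mem_erase] at hu hv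
    rcases c.vMap_eq_iff.1 huv with h | h | h
    exacts [h, absurd h.1 hu.1, absurd h.2 hv.1]
  have hcard := card_image_of_injOn hinj
  rw [himage, card_univ] at hcard
  rw [Multigraph.nV, Multigraph.nV, hcard, ← card_univ, card_erase_add_one (mem_univ _)]

theorem nE_eq_add_one {e : H.E} (c : Contraction H {e} X) : H.nE = X.nE + 1 := by
  have himage : univ.erase e = univ.image c.eMap := by
    ext g
    simpa [eq_comm] using (Set.ext_iff.1 c.range_eMap g).symm
  rw [Multigraph.nE, Multigraph.nE, ← card_univ (α := H.E), ← card_erase_add_one (mem_univ e),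
    himage, card_image_of_injective _ c.eMap_injective, card_univ]

theorem nV_eq (c : Contraction H ∅ X) : H.nV = X.nV :=
  Fintype.card_of_bijective ⟨c.vMap_injective, c.vMap_surjective⟩

theorem nE_eq (c : Contraction H ∅ X) : H.nE = X.nE :=
  (Fintype.card_of_bijective
    ⟨c.eMap_injective, Set.range_eq_univ.1 (by simp [c.range_eMap])⟩).symm

theorem sum_deg_fiber (c : Contraction H R X) (z : X.V) :
    ∑ u with c.vMap u = z, H.deg u =
      X.deg z + 2 * (univ.filter fun g => g ∈ R ∧ c.vMap (H.src g) = z).card := by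
  let ι (x : X.V) : ℕ := if x = z then 1 else 0
  have hsum : ∑ u with c.vMap u = z, H.deg u =
      ∑ g, (ι (c.vMap (H.src g)) + ι (c.vMap (H.tgt g))) := by
    simp only [H.deg_eq_sum]
    rw [sum_comm]
    simp [Finset.sum_add_distrib, ι]
  have hrange : (univ.filter fun g => g ∉ R) = univ.image c.eMap := by
    ext g
    simpa using (Set.ext_iff.1 c.range_eMap g).symm
  rw [hsum, ← sum_filter_not_add_sum_filter _ (fun g => g ∈ R)]
  congr 1
  · rw [hrange, sum_image c.eMap_injective.injOn, X.deg_eq_sum]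
    refine sum_congr rfl fun x _ => ?_
    rcases c.ends_eq_or x with ⟨hs, ht⟩ | ⟨hs, ht⟩ <;> rw [hs, ht]
    exact add_comm _ _
  · rw [← filter_filter, card_filter, mul_sum]
    refine sum_congr rfl fun g hg => ?_
    rw [← c.vMap_src_eq_tgt g (mem_filter.1 hg).2, two_mul]

theorem deg_vMap_eq (c : Contraction H R X) {u : H.V} (hu : ∀ v, c.vMap v = c.vMap u → v = u)
    (hR : ∀ g ∈ R, H.src g ≠ u) : X.deg (c.vMap u) = H.deg u := by
  have hsum := c.sum_deg_fiber (c.vMap u)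
  rw [show univ.filter (fun v => c.vMap v = c.vMap u) = {u} by
      ext v; simpa using ⟨hu v, congrArg _⟩,
    filter_eq_empty_iff.2 fun g _ hg => hR g hg.1 (hu _ hg.2), sum_singleton] at hsum
  simpa using hsum.symm

theorem deg_vMap (c : Contraction H ∅ X) (u : H.V) : X.deg (c.vMap u) = H.deg u :=
  c.deg_vMap_eq (fun _ h => c.vMap_injective h) (by simp)

theorem deg_vMap_of_ne {e : H.E} (c : Contraction H {e} X) {u : H.V} (hs : u ≠ H.src e)
    (ht : u ≠ H.tgt e) : X.deg (c.vMap u) = H.deg u :=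
  c.deg_vMap_eq (fun v h => by have := c.vMap_eq_iff.1 h; tauto) (by rintro g rfl; exact hs.symm)

theorem deg_src_add_deg_tgt {e : H.E} (c : Contraction H {e} X) (he : H.src e ≠ H.tgt e) :
    H.deg (H.src e) + H.deg (H.tgt e) = X.deg (c.vMap (H.src e)) + 2 := by
  have hsum := c.sum_deg_fiber (c.vMap (H.src e))
  rw [show univ.filter (fun v => c.vMap v = c.vMap (H.src e)) = {H.src e, H.tgt e} by
      ext v; simp [c.vMap_eq_iff, he], sum_pair he,
    card_eq_one.2 ⟨e, by ext g; simp +contextual⟩] at hsum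
  exact hsum

end Counting

end Contraction

namespace Contraction

variable {H X : Multigraph} {R : Set H.E} {e e' : H.E} {C : Finset H.V}

/-- Exchanging `e'` for `e`, by taking the symmetric difference with the `2`-cut, turns `A` into a
cut that survives the contraction of `e'`. -/
theorem le_card_cutEdges_of_pair (c : Contraction H {e'} X) {j : ℕ} (hX : X.IsEdgeConnected j)
    (hC : H.cutEdges C = {e, e'}) (hne : e ≠ e') {A : Finset H.V} (hA : A.Nonempty)
    (hA' : A ≠ univ) (heA : e ∉ H.cutEdges A) : j ≤ (H.cutEdges A).card := by
  by_cases he'A : e' ∈ H.cutEdges A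
  · have hcut : H.cutEdges (symmDiff A C) = insert e ((H.cutEdges A).erase e') := by
      ext g
      simp only [H.cutEdges_symmDiff, hC, mem_symmDiff, mem_insert, mem_singleton, mem_erase]
      grind
    have hnontriv := Multigraph.nonempty_and_ne_univ_of_mem_cutEdges (A := symmDiff A C) (e := e)
      (by rw [hcut]; exact mem_insert_self _ _)
    have hle := c.le_card_cutEdges hX hnontriv.1 hnontriv.2
      (by rintro g rfl; simp [hcut, hne.symm])
    rwa [hcut, card_insert_of_notMem (by simp [heA]), card_erase_add_one he'A] at hle
  · exact c.le_card_cutEdges hX hA hA' (by rintro g rfl; exact he'A)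

theorem isEdgeConnected_two_of_pair (c : Contraction H {e'} X) (hX : X.IsEdgeConnected 2)
    (hC : H.cutEdges C = {e, e'}) (hne : e ≠ e') : H.IsEdgeConnected 2 := by
  intro A hA hA'
  by_cases heA : e ∈ H.cutEdges A
  · by_cases he'A : e' ∈ H.cutEdges A
    · exact one_lt_card.2 ⟨e, heA, e', he'A, hne⟩
    · exact c.le_card_cutEdges hX hA hA' (by rintro g rfl; exact he'A)
  · exact c.le_card_cutEdges_of_pair hX hC hne hA hA' heA

theorem hasTrivialTwoCuts (c : Contraction H R X)
    (hdeg : ∀ z, (∀ u, c.vMap u = z → H.deg u = 2) → X.deg z = 2) (hH : H.HasTrivialTwoCuts) :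
    X.HasTrivialTwoCuts := by
  intro A hA
  rw [← c.card_cutEdges_preimage] at hA
  obtain ⟨B, hB, hdegB⟩ := hH _ hA
  obtain ⟨B, rfl⟩ := c.exists_preimage_eq (A := B) fun g hg => by
    rw [hB, c.cutEdges_preimage, mem_image]
    rintro ⟨x, -, rfl⟩
    exact c.eMap_notMem x hg
  rw [c.cutEdges_preimage, c.cutEdges_preimage] at hB
  exact ⟨B, image_injective c.eMap_injective hB,
    fun z hz => hdeg z fun u hu => hdegB u (mem_preimage.2 (hu ▸ hz))⟩

theorem hasTrivialTwoCuts_of_singleton (c : Contraction H {e} X) (he : H.src e ≠ H.tgt e)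
    (hH : H.HasTrivialTwoCuts) : X.HasTrivialTwoCuts := by
  refine c.hasTrivialTwoCuts (fun z hz => ?_) hH
  by_cases hze : z = c.vMap (H.src e)
  · have hsum := c.deg_src_add_deg_tgt he
    rw [hz _ hze.symm, hz _ (hze.trans (c.vMap_src_eq_tgt e rfl)).symm, ← hze] at hsum
    omega
  · obtain ⟨u, rfl⟩ := c.vMap_surjective z
    rw [c.deg_vMap_of_ne, hz u rfl] <;> rintro rfl
    exacts [hze rfl, hze (c.vMap_src_eq_tgt e rfl).symm]

theorem exists_cutEdges_eq_of_notMem (c : Contraction H R X)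
    (hdeg : ∀ u, X.deg (c.vMap u) = 2 → H.deg u = 2) (hX : X.HasTrivialTwoCuts) {A : Finset H.V}
    (hA : (H.cutEdges A).card = 2) (hR : ∀ g ∈ R, g ∉ H.cutEdges A) :
    ∃ B : Finset H.V, H.cutEdges B = H.cutEdges A ∧ ∀ v ∈ B, H.deg v = 2 := by
  obtain ⟨A, rfl⟩ := c.exists_preimage_eq hR
  rw [c.card_cutEdges_preimage] at hA
  obtain ⟨B, hB, hdegB⟩ := hX A hA
  refine ⟨c.preimage B, ?_, fun v hv => hdeg v (hdegB _ (mem_preimage.1 hv))⟩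
  rw [c.cutEdges_preimage, c.cutEdges_preimage, hB]

theorem deg_eq_two_of_deg_vMap (c : Contraction H {e} X) (he : H.src e ≠ H.tgt e)
    (hH : H.IsEdgeConnected 2) {u : H.V} (hu : X.deg (c.vMap u) = 2) : H.deg u = 2 := by
  have : Nontrivial H.V := ⟨⟨_, _, he⟩⟩
  have hsum := c.deg_src_add_deg_tgt he
  have hsrc := hH.le_deg (H.src e)
  have htgt := hH.le_deg (H.tgt e)
  by_cases hs : u = H.src e
  · subst hs; omega
  · by_cases ht : u = H.tgt e
    · rw [ht, ← c.vMap_src_eq_tgt e rfl] at hu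
      rw [ht]; omega
    · rwa [c.deg_vMap_of_ne hs ht] at hu

end Contraction

namespace Multigraph

variable {G H X : Multigraph}

theorem card_symmDiff_add_two_le {α : Type*} {s t : Finset α} {a : α} (has : a ∈ s)
    (hat : a ∈ t) : (symmDiff s t).card + 2 ≤ s.card + t.card := by
  have hs := card_sdiff_add_card_inter s t
  have ht := card_sdiff_add_card_inter t s
  have hst := card_pos.2 ⟨a, mem_inter.2 ⟨has, hat⟩⟩
  have hsymm : (symmDiff s t).card ≤ (s \ t).card + (t \ s).card := card_union_le _ _
  rw [inter_comm] at ht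
  omega

/-- A `2`-cut through `e'` is moved off `e'` by adding the degree-`2` endpoint of `e'`. -/
theorem HasTrivialTwoCuts.of_contraction {e' : H.E} (c : Contraction H {e'} X)
    (hX : X.HasTrivialTwoCuts) (hH : H.IsEdgeConnected 2) {x : H.V}
    (hx : e' ∈ H.cutEdges {x}) (hdeg : H.deg x = 2) : H.HasTrivialTwoCuts := by
  have he' := src_ne_tgt_of_mem_cutEdges hx
  have avoid {A : Finset H.V} (hA : (H.cutEdges A).card = 2) (he'A : e' ∉ H.cutEdges A) :=
    c.exists_cutEdges_eq_of_notMem (fun _ => c.deg_eq_two_of_deg_vMap he' hH) hX hA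
      (by rintro g rfl; exact he'A)
  have hxcard : (H.cutEdges {x}).card = 2 :=
    le_antisymm (hdeg ▸ H.card_cutEdges_singleton_le_deg x) (hH.le_card_cutEdges hx)
  intro A hA
  by_cases he'A : e' ∈ H.cutEdges A
  · have hcut := H.cutEdges_symmDiff A {x}
    by_cases hempty : H.cutEdges A = H.cutEdges {x}
    · exact ⟨{x}, hempty.symm, by simpa using hdeg⟩
    obtain ⟨g, hg⟩ : (H.cutEdges (symmDiff A {x})).Nonempty := by
      rwa [hcut, nonempty_iff_ne_empty, ← bot_eq_empty, Ne, symmDiff_eq_bot]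
    have hcard := card_symmDiff_add_two_le he'A hx
    rw [hA, hxcard, ← hcut] at hcard
    obtain ⟨B, hB, hdegB⟩ := avoid (le_antisymm (by omega) (hH.le_card_cutEdges hg))
      (by simp [hcut, mem_symmDiff, he'A, hx])
    refine ⟨symmDiff B {x}, ?_, fun v hv => ?_⟩
    · rw [H.cutEdges_symmDiff, hB, hcut, symmDiff_symmDiff_cancel_right]
    · rcases mem_symmDiff.1 hv with ⟨hv, -⟩ | ⟨hv, -⟩
      exacts [hdegB v hv, mem_singleton.1 hv ▸ hdeg]
  · exact avoid hA he'A

/-- The intrinsic description of the proper subdivisions (all chains have positive length) of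
`3`-edge-connected cubic graphs. -/
structure IsCubicSubdivision (X : Multigraph) : Prop where
  isEdgeConnected : X.IsEdgeConnected 2
  deg_le_three : ∀ v, X.deg v ≤ 3
  hasTrivialTwoCuts : X.HasTrivialTwoCuts

theorem IsCubicSubdivision.of_contraction {e e' : H.E} (c : Contraction H {e'} X)
    (hX : X.IsCubicSubdivision) {C : Finset H.V} (hC : H.cutEdges C = {e, e'}) (hne : e ≠ e') :
    H.IsCubicSubdivision := by
  have hH := c.isEdgeConnected_two_of_pair hX.isEdgeConnected hC hne
  have he' : H.src e' ≠ H.tgt e' := src_ne_tgt_of_mem_cutEdges (A := C) (by simp [hC])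
  have : Nontrivial H.V := ⟨⟨_, _, he'⟩⟩
  have hsum := c.deg_src_add_deg_tgt he'
  have hsrc := hH.le_deg (H.src e')
  have htgt := hH.le_deg (H.tgt e')
  have hmerged := hX.deg_le_three (c.vMap (H.src e'))
  refine ⟨hH, fun v => ?_, ?_⟩
  · by_cases hs : v = H.src e'
    · rw [hs]; omega
    by_cases ht : v = H.tgt e'
    · rw [ht]; omega
    exact c.deg_vMap_of_ne hs ht ▸ hX.deg_le_three _
  · have hend : H.deg (H.src e') = 2 ∨ H.deg (H.tgt e') = 2 := by omega
    refine hend.elim (hX.hasTrivialTwoCuts.of_contraction c hH ?_)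
      (hX.hasTrivialTwoCuts.of_contraction c hH ?_)
    · simp [mem_cutEdges, he'.symm]
    · simp [mem_cutEdges, he']

theorem IsCubicSubdivision.contract {e : H.E} (d : Contraction H {e} X)
    (hH : H.IsCubicSubdivision) {C : Finset H.V} (hC : (H.cutEdges C).card = 2)
    (heC : e ∈ H.cutEdges C) : X.IsCubicSubdivision := by
  have he := src_ne_tgt_of_mem_cutEdges heC
  refine ⟨d.isEdgeConnected hH.isEdgeConnected, fun z => ?_,
    d.hasTrivialTwoCuts_of_singleton he hH.hasTrivialTwoCuts⟩
  have hmerged : X.deg (d.vMap (H.src e)) ≤ 3 := by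
    obtain ⟨B, hB, hdegB⟩ := hH.hasTrivialTwoCuts C hC
    rw [← hB, mem_cutEdges] at heC
    have hend : H.deg (H.src e) = 2 ∨ H.deg (H.tgt e) = 2 :=
      (Classical.em (H.src e ∈ B)).imp (hdegB _) fun hs => hdegB _ (by tauto)
    have hsum := d.deg_src_add_deg_tgt he
    have hsrc := hH.deg_le_three (H.src e)
    have htgt := hH.deg_le_three (H.tgt e)
    omega
  obtain ⟨u, rfl⟩ := d.vMap_surjective z
  by_cases hs : u = H.src e
  · rwa [hs]
  by_cases ht : u = H.tgt e
  · rwa [ht, ← d.vMap_src_eq_tgt e rfl]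
  · exact (d.deg_vMap_of_ne hs ht).trans_le (hH.deg_le_three u)

end Multigraph

namespace IsShiftOf

variable {G G' H : Multigraph}

theorem of_contraction (hG : G.IsEdgeConnected 2) {e e' : H.E} {C : Finset H.V}
    (c : Contraction H {e'} G) (d : Contraction H {e} G') (hC : H.cutEdges C = {e, e'})
    (hne : e ≠ e') : IsShiftOf G G' := by
  have he : e ∈ H.cutEdges C := by simp [hC]
  have he' : e' ∈ H.cutEdges C := by simp [hC]
  have hH := c.isEdgeConnected_two_of_pair hG hC hne
  have ⟨hne₁, hne₂⟩ := Multigraph.nonempty_and_ne_univ_of_mem_cutEdges he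
  refine ⟨H, e, e', hne, Multigraph.src_ne_tgt_of_mem_cutEdges he,
    Multigraph.src_ne_tgt_of_mem_cutEdges he', ?_, Contraction.isIso_contract_iff.2 ⟨c⟩,
    Contraction.isIso_contract_iff.2 ⟨d⟩⟩
  exact hC ▸ hH.isBond_cutEdges hne₁ hne₂ (hC ▸ card_pair hne)

theorem exists_contraction (h : IsShiftOf G G') :
    ∃ (H : Multigraph) (e e' : H.E) (C : Finset H.V), e ≠ e' ∧ H.cutEdges C = {e, e'} ∧
      Nonempty (Contraction H {e'} G) ∧ Nonempty (Contraction H {e} G') := by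
  obtain ⟨H, e, e', hne, -, -, ⟨⟨C, -, -, hC⟩, -⟩, hG, hG'⟩ := h
  exact ⟨H, e, e', C, hne, hC.symm, Contraction.isIso_contract_iff.1 hG,
    Contraction.isIso_contract_iff.1 hG'⟩

theorem symm (h : IsShiftOf G G') : IsShiftOf G' G := by
  obtain ⟨H, e, e', hne, he, he', hbond, hG, hG'⟩ := h
  exact ⟨H, e', e, hne.symm, he', he, pair_comm e e' ▸ hbond, hG', hG⟩

theorem isEdgeConnected (h : IsShiftOf G G') {j : ℕ} (hG : G.IsEdgeConnected j) :
    G'.IsEdgeConnected j := by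
  obtain ⟨H, e, e', C, hne, hC, ⟨c⟩, ⟨d⟩⟩ := h.exists_contraction
  intro B hB hB'
  rw [← d.card_cutEdges_preimage]
  refine c.le_card_cutEdges_of_pair hG hC hne (d.preimage_nonempty_iff.2 hB)
    (d.preimage_eq_univ_iff.not.2 hB') ?_
  simpa [d.cutEdges_preimage] using fun x _ => d.eMap_notMem x

theorem isCubicSubdivision (h : IsShiftOf G G') (hG : G.IsCubicSubdivision) :
    G'.IsCubicSubdivision := by
  obtain ⟨H, e, e', C, hne, hC, ⟨c⟩, ⟨d⟩⟩ := h.exists_contraction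
  exact (hG.of_contraction c hC hne).contract d (hC ▸ card_pair hne) (by simp [hC])

end IsShiftOf

namespace EquivalentGraphs

variable {G G' : Multigraph}

theorem symm (h : EquivalentGraphs G G') : EquivalentGraphs G' G := by
  induction h with
  | refl => exact .refl
  | tail _ hshift ih => exact .head hshift.symm ih

theorem isEdgeConnected (h : EquivalentGraphs G G') {j : ℕ} (hG : G.IsEdgeConnected j) :
    G'.IsEdgeConnected j := by
  induction h with
  | refl => exact hG
  | tail _ hshift ih => exact hshift.isEdgeConnected ih

theorem isCubicSubdivision (h : EquivalentGraphs G G') (hG : G.IsCubicSubdivision) :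
    G'.IsCubicSubdivision := by
  induction h with
  | refl => exact hG
  | tail _ hshift ih => exact hshift.isCubicSubdivision ih

end EquivalentGraphs

theorem IsIso.hasTrivialTwoCuts {G H : Multigraph} (h : IsIso G H) (hG : G.HasTrivialTwoCuts) :
    H.HasTrivialTwoCuts := by
  obtain ⟨c⟩ := h.nonempty_contraction
  refine c.hasTrivialTwoCuts (fun z hz => ?_) hG
  obtain ⟨u, rfl⟩ := c.vMap_surjective z
  exact (c.deg_vMap u).trans (hz u rfl)

theorem IsIso.isCubicSubdivision {G H : Multigraph} (h : IsIso G H) (hG : G.IsCubicSubdivision) :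
    H.IsCubicSubdivision := by
  obtain ⟨c⟩ := h.nonempty_contraction
  refine ⟨c.isEdgeConnected hG.isEdgeConnected, fun z => ?_,
    h.hasTrivialTwoCuts hG.hasTrivialTwoCuts⟩
  obtain ⟨u, rfl⟩ := c.vMap_surjective z
  exact (c.deg_vMap u).trans_le (hG.deg_le_three u)

namespace Multigraph

variable {X Y : Multigraph}

/-- The expansion of `X` at `v`: a new vertex is joined to `v` by a new edge, and takes over from
`v` the initial incidences of the edges in `S` and the terminal incidences of the edges in `T`. The
new vertex and the new edge are encoded by `none`. -/
def expand (X : Multigraph) (v : X.V) (S T : Set X.E) : Multigraph where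
  V := Option X.V
  E := Option X.E
  src e := e.elim none fun g => if X.src g = v ∧ g ∈ S then none else some (X.src g)
  tgt e := e.elim (some v) fun g => if X.tgt g = v ∧ g ∈ T then none else some (X.tgt g)

section Expand

variable {v : X.V} {S T : Set X.E}

/-- The vertex created by an expansion. -/
def newVertex : (X.expand v S T).V := none

/-- The vertex of an expansion inherited from the vertex `u`. -/
def oldVertex (u : X.V) : (X.expand v S T).V := some u

/-- The edge created by an expansion. -/
def newEdge : (X.expand v S T).E := none

/-- The edge of an expansion inherited from the edge `g`. -/
def oldEdge (g : X.E) : (X.expand v S T).E := some g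

@[simp] theorem newVertex_ne_oldVertex (u : X.V) :
    (newVertex : (X.expand v S T).V) ≠ oldVertex u := nofun

theorem newEdge_ne_oldEdge (g : X.E) : (newEdge : (X.expand v S T).E) ≠ oldEdge g := nofun

theorem oldEdge_injective : Function.Injective (oldEdge : X.E → (X.expand v S T).E) :=
  Option.some_injective _

theorem eq_newEdge_or_exists_eq_oldEdge (e : (X.expand v S T).E) :
    e = newEdge ∨ ∃ g, e = oldEdge g := by
  rcases e with _ | g
  exacts [.inl rfl, .inr ⟨g, rfl⟩]

theorem ends_newEdge : (X.expand v S T).ends newEdge = s(newVertex, oldVertex v) := rfl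

theorem src_ne_tgt_newEdge : (X.expand v S T).src newEdge ≠ (X.expand v S T).tgt newEdge :=
  newVertex_ne_oldVertex v

theorem ends_oldEdge (g : X.E) : (X.expand v S T).ends (oldEdge g) =
    s(if X.src g = v ∧ g ∈ S then newVertex else oldVertex (X.src g),
      if X.tgt g = v ∧ g ∈ T then newVertex else oldVertex (X.tgt g)) := rfl

end Expand

/-- The subdivision of the edge `f` by one new vertex; the edge `oldEdge f` keeps the source of `f`,
and the new edge takes over its target. -/
abbrev subdivideEdge (X : Multigraph) (f : X.E) : Multigraph := X.expand (X.tgt f) ∅ {f}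

theorem ends_subdivideEdge_self (f : X.E) :
    (X.subdivideEdge f).ends (oldEdge f) = s(oldVertex (X.src f), newVertex) := by
  simp [ends_oldEdge]

theorem ends_subdivideEdge_of_ne {f g : X.E} (h : g ≠ f) :
    (X.subdivideEdge f).ends (oldEdge g) = (X.ends g).map oldVertex := by
  simp [ends_oldEdge, ends.eq_1 X, h]

/-- The vertex `x` is incident, once each, with exactly the two non-loop edges `e` and `f`. -/
structure IsSeriesVertex (X : Multigraph) (x : X.V) (e f : X.E) : Prop where
  ne : e ≠ f
  cutEdges_eq : X.cutEdges {x} = {e, f}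
  mem_cutEdges_of_mem_ends : ∀ g, x ∈ X.ends g → g ∈ X.cutEdges {x}

theorem isSeriesVertex_subdivideEdge (f : X.E) :
    (X.subdivideEdge f).IsSeriesVertex newVertex newEdge (oldEdge f) := by
  have hends : ∀ g, newVertex ∈ (X.subdivideEdge f).ends g → g = newEdge ∨ g = oldEdge f := by
    intro e he
    refine (eq_newEdge_or_exists_eq_oldEdge e).imp_right ?_
    rintro ⟨g, rfl⟩
    refine congrArg oldEdge (by_contra fun h => ?_)
    rw [ends_subdivideEdge_of_ne h] at he
    obtain ⟨u, -, hu⟩ := Sym2.mem_map.1 he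
    exact newVertex_ne_oldVertex u hu.symm
  have hcut : ∀ g, g = newEdge ∨ g = oldEdge f → g ∈ (X.subdivideEdge f).cutEdges {newVertex} := by
    rintro g (rfl | rfl)
    · exact (mem_cutEdges_of_ends_eq ends_newEdge).2 (by simp [eq_comm])
    · exact (mem_cutEdges_of_ends_eq (ends_subdivideEdge_self f)).2 (by simp [eq_comm])
  refine ⟨newEdge_ne_oldEdge f, ?_, fun g hg => hcut g (hends g hg)⟩
  ext g
  rw [mem_insert, mem_singleton]
  refine ⟨fun hg => hends g (by_contra fun h => mem_cutEdges.1 hg ?_), hcut g⟩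
  simp only [ends, Sym2.mem_iff, not_or] at h
  simp only [mem_singleton, Ne.symm h.1, Ne.symm h.2]

theorem exists_ends_eq_of_mem_cutEdges {x : X.V} {e : X.E} (h : e ∈ X.cutEdges {x}) :
    ∃ y ≠ x, X.ends e = s(x, y) := by
  simp only [mem_cutEdges, mem_singleton] at h
  by_cases hs : X.src e = x
  · exact ⟨X.tgt e, by tauto, by rw [ends, hs]⟩
  · exact ⟨X.src e, hs, by rw [ends, show X.tgt e = x by tauto, Sym2.eq_swap]⟩

theorem isSeriesVertex_of_deg_eq_two (hX : X.IsEdgeConnected 2) {x : X.V}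
    (hx : ({x} : Finset X.V) ≠ univ) (hdeg : X.deg x = 2) : ∃ e f, X.IsSeriesVertex x e f := by
  have hle : 2 ≤ (X.cutEdges {x}).card := hX {x} (singleton_nonempty x) hx
  obtain ⟨e, f, hef, hcut⟩ :=
    card_eq_two.1 (le_antisymm (hdeg ▸ X.card_cutEdges_singleton_le_deg x) hle)
  refine ⟨e, f, hef, hcut, fun g hg => ?_⟩
  have hsub : X.cutEdges {x} ⊆
      (univ.filter fun g => X.src g = x) ∪ univ.filter fun g => X.tgt g = x := fun g hg => by
    simp only [mem_cutEdges, mem_singleton, mem_union, mem_filter, mem_univ, true_and] at hg ⊢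
    tauto
  rw [eq_of_subset_of_card_le hsub ((card_union_le _ _).trans (hdeg.le.trans hle))]
  simpa [ends, eq_comm] using hg

theorem IsSeriesVertex.src_ne_tgt {x : X.V} {e f : X.E} (h : X.IsSeriesVertex x e f) :
    X.src e ≠ X.tgt e :=
  src_ne_tgt_of_mem_cutEdges (A := {x}) (by simp [h.cutEdges_eq])

theorem IsSeriesVertex.mem_ends_iff {x : X.V} {e f g : X.E} (h : X.IsSeriesVertex x e f) :
    x ∈ X.ends g ↔ g = e ∨ g = f := by
  have hg : g ∈ X.cutEdges {x} ↔ g = e ∨ g = f := by simp [h.cutEdges_eq]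
  refine ⟨fun hx => hg.1 (h.mem_cutEdges_of_mem_ends g hx), fun hef => ?_⟩
  obtain ⟨y, -, hy⟩ := exists_ends_eq_of_mem_cutEdges (hg.2 hef)
  simp [hy]

end Multigraph

namespace Contraction

open Multigraph

variable {H X Y : Multigraph}

/-- Contracting the new edge undoes an expansion. -/
def expand (X : Multigraph) (v : X.V) (S T : Set X.E) :
    Contraction (X.expand v S T) {newEdge} X where
  vMap u := Option.getD u v
  eMap := oldEdge
  vMap_surjective u := ⟨oldVertex u, rfl⟩
  eMap_injective := oldEdge_injective
  range_eMap := by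
    ext (_ | g)
    · exact iff_of_false (fun ⟨g, hg⟩ => newEdge_ne_oldEdge g hg.symm) fun h => h rfl
    · exact iff_of_true ⟨g, rfl⟩ (newEdge_ne_oldEdge g).symm
  vMap_src_eq_tgt := by rintro _ rfl; rfl
  mem_iff := by
    intro W hW
    have hv : newVertex ∈ W ↔ oldVertex v ∈ W := hW newEdge rfl
    rintro (_ | u) (_ | u') h
    · rfl
    · rwa [show u' = v from h.symm]
    · rw [show u = v from h]; exact hv.symm
    · rw [show u = u' from h]
  map_ends g := by
    rw [ends_oldEdge, Sym2.map_mk]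
    by_cases hs : X.src g = v ∧ g ∈ S <;> by_cases ht : X.tgt g = v ∧ g ∈ T <;>
      simp [ends, newVertex, oldVertex, hs, ht]

/-- Contracting the new edge undoes the subdivision of an edge. -/
def subdivideEdge (X : Multigraph) (f : X.E) : Contraction (X.subdivideEdge f) {newEdge} X :=
  expand X (X.tgt f) ∅ {f}

theorem vMap_eq_of_ends_eq {R : Set Y.E} (c : Contraction Y R X) {e : Y.E} (he : e ∈ R)
    {x y : Y.V} (h : Y.ends e = s(x, y)) : c.vMap x = c.vMap y := by
  have := c.vMap_src_eq_tgt e he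
  rcases Sym2.eq_iff.1 h with ⟨rfl, rfl⟩ | ⟨rfl, rfl⟩
  exacts [this, this.symm]

theorem exists_ne_vMap_eq {x : Y.V} {e f : Y.E} (c : Contraction Y {e} X)
    (hs : Y.IsSeriesVertex x e f) (z : X.V) : ∃ u ≠ x, c.vMap u = z := by
  obtain ⟨u, rfl⟩ := c.vMap_surjective z
  by_cases hu : u = x
  · obtain ⟨y, hyx, hy⟩ := exists_ends_eq_of_mem_cutEdges (x := x) (e := e)
      (by simp [hs.cutEdges_eq])
    exact ⟨y, hyx, hu ▸ (c.vMap_eq_of_ends_eq rfl hy).symm⟩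
  · exact ⟨u, hu, rfl⟩

theorem isIso_subdivideEdge_of_isSeriesVertex_of_ends {x : Y.V} {e a b : Y.E} {f : X.E}
    (c : Contraction Y {e} X) (hs : Y.IsSeriesVertex x e (c.eMap f))
    {p : Y.V → (X.subdivideEdge f).V}
    (hp : p = fun v => if v = x then newVertex else oldVertex (c.vMap v))
    (hab : ∀ g, g = e ∨ g = c.eMap f → g = a ∨ g = b)
    (ha : (Y.ends a).map p = s(newVertex, oldVertex (X.tgt f)))
    (hb : (Y.ends b).map p = s(oldVertex (X.src f), newVertex)) : IsIso Y (X.subdivideEdge f) := by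
  have hp_ne {v} (hv : v ≠ x) : p v = oldVertex (c.vMap v) := by simp [hp, hv]
  have hpx : p x = newVertex := by simp [hp]
  let r : (X.subdivideEdge f).E → Y.E := fun g => Option.elim g a (Function.update c.eMap f b)
  have hr_self : r (oldEdge f) = b := by simp [r, oldEdge]
  have hr_ne {g} (hg : g ≠ f) : r (oldEdge g) = c.eMap g := Function.update_of_ne hg ..
  refine isIso_of_surjective (p := p) (r := r) ?_ (fun g => ?_) ?_ ?_ ?_
  · rintro (_ | v)
    · exact ⟨x, hpx⟩
    · obtain ⟨u, hu, rfl⟩ := c.exists_ne_vMap_eq hs v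
      exact ⟨u, hp_ne hu⟩
  · by_cases hg : g = e ∨ g = c.eMap f
    · rcases hab g hg with rfl | rfl
      · exact ⟨newEdge, rfl⟩
      · exact ⟨oldEdge f, hr_self⟩
    · rw [not_or] at hg
      obtain ⟨g', rfl⟩ := c.exists_eMap_eq hg.1
      exact ⟨oldEdge g', hr_ne fun h => hg.2 (congrArg _ h)⟩
  · rw [c.nV_eq_add_one hs.src_ne_tgt, (subdivideEdge X f).nV_eq_add_one
      (isSeriesVertex_subdivideEdge f).src_ne_tgt]
  · rw [c.nE_eq_add_one, (subdivideEdge X f).nE_eq_add_one]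
  · intro h
    obtain rfl | ⟨g, rfl⟩ := eq_newEdge_or_exists_eq_oldEdge h
    · exact ha
    · by_cases hg : g = f
      · rw [hg, hr_self, hb, ends_subdivideEdge_self]
      · rw [hr_ne hg, ends_subdivideEdge_of_ne hg, ← c.map_ends, Sym2.map_map]
        refine Sym2.map_congr fun u hu => hp_ne ?_
        rintro rfl
        rcases hs.mem_ends_iff.1 hu with h | h
        · exact c.eMap_notMem g h
        · exact hg (c.eMap_injective h)

theorem isIso_subdivideEdge_of_isSeriesVertex {x : Y.V} {e : Y.E} {f : X.E}
    (c : Contraction Y {e} X) (hs : Y.IsSeriesVertex x e (c.eMap f)) :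
    IsIso Y (X.subdivideEdge f) := by
  obtain ⟨y, hyx, hy⟩ := exists_ends_eq_of_mem_cutEdges (x := x) (e := e) (by simp [hs.cutEdges_eq])
  obtain ⟨z, hzx, hz⟩ := exists_ends_eq_of_mem_cutEdges (x := x) (e := c.eMap f)
    (by simp [hs.cutEdges_eq])
  have hxy : c.vMap x = c.vMap y := c.vMap_eq_of_ends_eq rfl hy
  have hf : s(c.vMap y, c.vMap z) = s(X.src f, X.tgt f) := by
    rw [← hxy, ← Sym2.map_mk, ← hz, c.map_ends f, ends]
  rcases Sym2.eq_iff.1 hf with ⟨hsrc, htgt⟩ | ⟨htgt, hsrc⟩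
  · refine c.isIso_subdivideEdge_of_isSeriesVertex_of_ends hs (a := c.eMap f) (b := e) rfl
      (fun _ => Or.symm) ?_ ?_
    · simp [hz, hzx, htgt]
    · simp [hy, hyx, hsrc, Sym2.eq_swap]
  · refine c.isIso_subdivideEdge_of_isSeriesVertex_of_ends hs (a := e) (b := c.eMap f) rfl
      (fun _ => id) ?_ ?_
    · simp [hy, hyx, htgt]
    · simp [hz, hzx, hsrc, Sym2.eq_swap]

theorem isIso_subdivideEdge (c : Contraction H ∅ X) (f : X.E) :
    IsIso (H.subdivideEdge (c.eMap f)) (X.subdivideEdge f) :=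
  (c.compIso (subdivideEdge H (c.eMap f))).isIso_subdivideEdge_of_isSeriesVertex
    (isSeriesVertex_subdivideEdge (c.eMap f))

theorem isSeriesVertex_vMap {R : Set H.E} (d : Contraction H R Y) {x : H.V} {a b : Y.E}
    (hs : H.IsSeriesVertex x (d.eMap a) (d.eMap b)) : Y.IsSeriesVertex (d.vMap x) a b := by
  have hR : ∀ g ∈ R, x ∉ H.ends g := fun g hg hx => by
    rcases hs.mem_ends_iff.1 hx with rfl | rfl
    exacts [d.eMap_notMem a hg, d.eMap_notMem b hg]
  have hfiber u : d.vMap u = d.vMap x ↔ u = x := by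
    refine ⟨fun h => (d.mem_iff {x} (fun g hg => ?_) x u h.symm).1 rfl, fun h => h ▸ rfl⟩
    have := hR g hg
    simp only [ends, Sym2.mem_iff, not_or] at this
    simp only [Set.mem_singleton_iff, Ne.symm this.1, Ne.symm this.2]
  have hpre : d.preimage {d.vMap x} = {x} := by ext u; simp [hfiber]
  have hmem g : g ∈ Y.cutEdges {d.vMap x} ↔ d.eMap g ∈ H.cutEdges {x} := by
    rw [← hpre, d.eMap_mem_cutEdges_preimage]
  refine ⟨fun h => hs.ne (congrArg _ h), ?_, fun g hg => ?_⟩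
  · ext g
    simp [hmem, hs.cutEdges_eq, d.eMap_injective.eq_iff]
  · rw [hmem]
    refine hs.mem_cutEdges_of_mem_ends _ ?_
    rw [← d.map_ends, Sym2.mem_map] at hg
    obtain ⟨u, hu, hux⟩ := hg
    exact (hfiber u).1 hux ▸ hu

theorem nonempty_subdivideEdge {a : H.E} (c : Contraction H {a} X) (f : X.E) :
    Nonempty (Contraction (H.subdivideEdge (c.eMap f)) {oldEdge a} (X.subdivideEdge f)) := by
  let n := subdivideEdge H (c.eMap f)
  let d := contract (H.subdivideEdge (c.eMap f)) (oldEdge a)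
  obtain ⟨g, -, hg⟩ := d.exists_factor (c.comp n) (by
    rintro _ rfl; exact .inr ⟨a, Set.mem_singleton a, rfl⟩)
  obtain ⟨b, hb⟩ := d.exists_eMap_eq (newEdge_ne_oldEdge a)
  let g' : Contraction _ {b} X := g.congr (by
    ext y
    rw [Set.mem_singleton_iff, ← d.eMap_injective.eq_iff, hb, Set.mem_preimage]
    refine ⟨fun h => h.resolve_right ?_, .inl⟩
    rintro ⟨_, rfl, h⟩
    exact d.eMap_notMem y h.symm)
  have hs : ((H.subdivideEdge (c.eMap f)).contract (oldEdge a)).IsSeriesVertex (d.vMap newVertex) b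
      (g'.eMap f) := by
    refine d.isSeriesVertex_vMap ?_
    rw [hb, show d.eMap (g'.eMap f) = oldEdge (c.eMap f) from hg f]
    exact isSeriesVertex_subdivideEdge _
  exact isIso_contract_iff.1 (g'.isIso_subdivideEdge_of_isSeriesVertex hs)

end Contraction

namespace Multigraph

variable {X : Multigraph}

theorem IsEdgeConnected.subdivideEdge (h : X.IsEdgeConnected 2) (f : X.E) :
    (X.subdivideEdge f).IsEdgeConnected 2 :=
  have hs := isSeriesVertex_subdivideEdge f
  (Contraction.subdivideEdge X f).isEdgeConnected_two_of_pair h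
    (hs.cutEdges_eq.trans (Finset.pair_comm _ _)) hs.ne.symm

theorem exists_cutEdges_subdivideEdge_eq {a f : X.E} (haf : a ≠ f) {A : Finset X.V}
    (hA : X.cutEdges A = {f, a}) :
    ∃ A', (X.subdivideEdge f).cutEdges A' = {newEdge, oldEdge a} := by
  refine ⟨symmDiff ((Contraction.subdivideEdge X f).preimage A) {newVertex}, ?_⟩
  rw [cutEdges_symmDiff, (isSeriesVertex_subdivideEdge f).cutEdges_eq,
    Contraction.cutEdges_preimage, hA, image_insert, image_singleton]
  change symmDiff {oldEdge f, oldEdge a} {newEdge, oldEdge f} = _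
  have hne : (oldEdge a : (X.subdivideEdge f).E) ≠ oldEdge f := oldEdge_injective.ne haf
  have hf := newEdge_ne_oldEdge (v := X.tgt f) (S := ∅) (T := {f}) f
  have ha := newEdge_ne_oldEdge (v := X.tgt f) (S := ∅) (T := {f}) a
  ext g
  simp only [mem_symmDiff, mem_insert, mem_singleton]
  grind

end Multigraph

namespace subdivide

open Multigraph

variable {D : Multigraph} {w : D.E → ℕ}

/-- The vertex of the weak subdivision inherited from `v`. -/
def branch (v : D.V) : (subdivide D w).V := .inl (Quot.mk _ v)

/-- The `j`-th vertex along the chain of `e`, as a vertex of the weak subdivision. -/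
def node (e : D.E) (j : ℕ) : (subdivide D w).V := chainNode D w e j

/-- The `i`-th edge on the chain of `e`, as an edge of the weak subdivision. -/
def chainEdge (e : D.E) (i : Fin (w e)) : (subdivide D w).E := ⟨e, i⟩

theorem ends_chainEdge (e : D.E) (i : Fin (w e)) :
    (subdivide D w).ends (chainEdge e i) = s(node e i, node e (i + 1)) := rfl

theorem eq_and_eq_of_chainEdge_eq {e e' : D.E} {i : Fin (w e)} {i' : Fin (w e')}
    (h : chainEdge e i = chainEdge e' i') : e = e' ∧ (i : ℕ) = i' := by
  cases h
  exact ⟨rfl, rfl⟩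

theorem node_zero (e : D.E) : (node e 0 : (subdivide D w).V) = branch (D.src e) := by
  simp only [node, chainNode, branch, lt_irrefl, false_and, dite_false, if_true]; rfl

theorem node_of_le {e : D.E} {j : ℕ} (hj : w e ≤ j) :
    (node e j : (subdivide D w).V) = branch (D.tgt e) := by
  rw [node, chainNode, dif_neg (by omega), branch]
  split_ifs with h
  · exact congrArg Sum.inl (Quot.sound ⟨e, by omega, rfl, rfl⟩)
  · rfl

theorem node_of_lt {e : D.E} {j : ℕ} (hj₀ : 0 < j) (hj : j < w e) :
    (node e j : (subdivide D w).V) = .inr ⟨e, ⟨j - 1, by omega⟩⟩ :=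
  dif_pos ⟨hj₀, hj⟩

theorem exists_eq_branch_or_eq_node (x : (subdivide D w).V) :
    (∃ v, x = branch v) ∨ ∃ e j, 0 < j ∧ j < w e ∧ x = node e j := by
  rcases x with q | ⟨e, i⟩
  · exact .inl (q.exists_rep.imp fun v hv => congrArg Sum.inl hv.symm)
  · refine .inr ⟨e, i + 1, by omega, by omega, ?_⟩
    rw [node_of_lt (by omega) (by omega)]
    rfl

theorem exists_map {α : Type*} (φ : D.V → α) (ψ : D.E → ℕ → α)
    (hsrc : ∀ e, ψ e 0 = φ (D.src e)) (htgt : ∀ e, ψ e (w e) = φ (D.tgt e)) :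
    ∃ p : (subdivide D w).V → α, (∀ v, p (branch v) = φ v) ∧
      ∀ e, ∀ j ≤ w e, p (node e j) = ψ e j := by
  refine ⟨Sum.elim (Quot.lift φ ?_) fun x => ψ x.1 (x.2 + 1), fun _ => rfl, fun e j hj => ?_⟩
  · rintro _ _ ⟨e, he, rfl, rfl⟩
    rw [← hsrc, ← htgt, he]
  · rcases Nat.eq_zero_or_pos j with rfl | hj₀
    · rw [node_zero, hsrc]; rfl
    · rcases hj.eq_or_lt with rfl | hj
      · rw [node_of_le le_rfl, htgt]; rfl
      · rw [node_of_lt hj₀ hj]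
        exact congrArg (ψ e) (Nat.sub_add_cancel hj₀)

theorem eq_of_branch_eq {α : Type*} (φ : D.V → α) (hφ : ∀ e, w e = 0 → φ (D.src e) = φ (D.tgt e))
    {u v : D.V} (h : (branch u : (subdivide D w).V) = branch v) : φ u = φ v := by
  obtain ⟨p, hp, -⟩ := exists_map (w := w) φ
    (fun e j => if j = 0 then φ (D.src e) else φ (D.tgt e)) (by simp) fun e => by
      split_ifs with h
      exacts [hφ e h, rfl]
  rw [← hp u, ← hp v, h]

theorem node_eq_node {e e' : D.E} {j j' : ℕ} (hj₀ : 0 < j) (hj : j < w e)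
    (h : (node e' j' : (subdivide D w).V) = node e j) : e' = e ∧ j' = j := by
  obtain ⟨p, hp, hp'⟩ := exists_map (w := w) (fun _ => none)
    (fun e j => if 0 < j ∧ j < w e then some (e, j) else none) (by simp) (by simp)
  have hval := hp' e j hj.le
  rw [if_pos ⟨hj₀, hj⟩, ← h] at hval
  rcases le_or_gt j' (w e') with hj' | hj'
  · rw [hp' e' j' hj'] at hval
    split_ifs at hval
    simpa using hval
  · simp [node_of_le hj'.le, hp] at hval

theorem node_eq_branch (hw : ∀ e, 1 ≤ w e) {e : D.E} {j : ℕ} {v : D.V}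
    (h : (node e j : (subdivide D w).V) = branch v) :
    j = 0 ∧ D.src e = v ∨ w e ≤ j ∧ D.tgt e = v := by
  have hinj {u : D.V} (hu : (branch u : (subdivide D w).V) = branch v) : u = v :=
    eq_of_branch_eq id (fun e he => absurd (hw e) (by omega)) hu
  rcases Nat.eq_zero_or_pos j with rfl | hj₀
  · exact .inl ⟨rfl, hinj (node_zero e ▸ h)⟩
  · rcases le_or_gt (w e) j with hj | hj
    · exact .inr ⟨hj, hinj (node_of_le hj ▸ h)⟩
    · simp [node_of_lt hj₀ hj, branch] at h

theorem deg_node_le_two {e : D.E} {j : ℕ} (hj₀ : 0 < j) (hj : j < w e) :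
    (subdivide D w).deg (node e j) ≤ 2 := by
  refine Nat.add_le_add (b := 1) (d := 1) (card_le_one.2 ?_) (card_le_one.2 ?_)
  all_goals
    rintro ⟨e₁, i₁⟩ h₁ ⟨e₂, i₂⟩ h₂
    obtain ⟨rfl, hi₁⟩ := node_eq_node hj₀ hj (mem_filter.1 h₁).2
    obtain ⟨rfl : e₂ = e₁, hi₂⟩ := node_eq_node hj₀ hj (mem_filter.1 h₂).2
    exact congrArg (Sigma.mk e₂) (Fin.ext (by simpa using hi₁.trans hi₂.symm))

theorem deg_branch_le (hw : ∀ e, 1 ≤ w e) (v : D.V) :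
    (subdivide D w).deg (branch v) ≤ D.deg v := by
  refine Nat.add_le_add ?_ ?_ <;> refine card_le_card_of_injOn Sigma.fst ?_ ?_
  · rintro ⟨e, i⟩ h
    rcases node_eq_branch hw (mem_filter.1 h).2 with ⟨-, h⟩ | ⟨h, -⟩
    exacts [mem_filter.2 ⟨mem_univ _, h⟩, absurd h (by simp)]
  · rintro ⟨e, i⟩ h ⟨e', i'⟩ h' (rfl : e = e')
    have hi := node_eq_branch hw (mem_filter.1 h).2
    have hi' := node_eq_branch hw (mem_filter.1 h').2
    dsimp only at hi hi'
    congr 1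
    omega
  · rintro ⟨e, i⟩ h
    rcases node_eq_branch hw (mem_filter.1 h).2 with ⟨h, -⟩ | ⟨-, h⟩
    exacts [absurd h (by simp), mem_filter.2 ⟨mem_univ _, h⟩]
  · rintro ⟨e, i⟩ h ⟨e', i'⟩ h' (rfl : e = e')
    have hi := node_eq_branch hw (mem_filter.1 h).2
    have hi' := node_eq_branch hw (mem_filter.1 h').2
    dsimp only at hi hi'
    congr 1
    omega

theorem deg_le_three (hD : ∀ v, D.deg v = 3) (hw : ∀ e, 1 ≤ w e) (x : (subdivide D w).V) :
    (subdivide D w).deg x ≤ 3 := by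
  rcases exists_eq_branch_or_eq_node x with ⟨v, rfl⟩ | ⟨e, j, hj₀, hj, rfl⟩
  · exact (deg_branch_le hw v).trans (hD v).le
  · exact (deg_node_le_two hj₀ hj).trans (by simp)

theorem exists_mem_cutEdges {A : Finset (subdivide D w).V} {e : D.E}
    (he : e ∈ D.cutEdges {v | branch v ∈ A}) : ∃ i, chainEdge e i ∈ (subdivide D w).cutEdges A := by
  by_contra! hA
  have hconst : ∀ j ≤ w e, (node e 0 ∈ A ↔ node e j ∈ A) := by
    intro j
    induction j with
    | zero => simp
    | succ j ih =>
      intro hj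
      have hstep := hA ⟨j, hj⟩
      rw [mem_cutEdges_of_ends_eq (ends_chainEdge _ _), not_not] at hstep
      exact (ih (by omega)).trans hstep
  have hends := hconst (w e) le_rfl
  rw [node_zero, node_of_le le_rfl] at hends
  simp [mem_cutEdges, hends] at he

theorem card_cutEdges_le (A : Finset (subdivide D w).V) :
    (D.cutEdges {v | branch v ∈ A}).card ≤ ((subdivide D w).cutEdges A).card :=
  card_le_card_of_surjOn Sigma.fst fun _ he =>
    (exists_mem_cutEdges he).elim fun i hi => ⟨⟨_, i⟩, hi, rfl⟩

theorem deg_eq_two_of_branch_notMem (h : (subdivide D w).IsEdgeConnected 2)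
    {A : Finset (subdivide D w).V} (hA : A ≠ univ) (hbranch : ∀ v, branch v ∉ A)
    {x : (subdivide D w).V} (hx : x ∈ A) : (subdivide D w).deg x = 2 := by
  refine le_antisymm ?_ ?_
  · rcases exists_eq_branch_or_eq_node x with ⟨v, rfl⟩ | ⟨e, j, hj₀, hj, rfl⟩
    exacts [absurd hx (hbranch v), deg_node_le_two hj₀ hj]
  · refine (h {x} (singleton_nonempty x) fun huniv => hA ?_).trans
      (card_cutEdges_singleton_le_deg _ x)
    exact eq_univ_of_forall fun y => mem_singleton.1 (huniv ▸ mem_univ y) ▸ hx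

theorem hasTrivialTwoCuts (hD : D.IsEdgeConnected 3) (h : (subdivide D w).IsEdgeConnected 2) :
    (subdivide D w).HasTrivialTwoCuts := by
  intro A hA
  have ⟨hne, hne'⟩ := nonempty_and_ne_univ_of_card_cutEdges hA
  rcases eq_empty_or_nonempty ({v | branch v ∈ A} : Finset D.V) with hempty | hB
  · exact ⟨A, rfl, fun _ =>
      deg_eq_two_of_branch_notMem h hne' fun v => filter_eq_empty_iff.1 hempty (mem_univ v)⟩
  · have huniv : ({v | branch v ∈ A} : Finset D.V) = univ := by
      by_contra hB'
      have := (hD _ hB hB').trans (card_cutEdges_le A)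
      omega
    refine ⟨Aᶜ, cutEdges_compl A, fun _ =>
      deg_eq_two_of_branch_notMem h ((compl_ne_univ_iff_nonempty A).2 hne) fun v => ?_⟩
    rw [mem_compl, not_not]
    simpa using huniv.ge (mem_univ v)

theorem isCubicSubdivision (hD : D.IsEdgeConnected 3) (hdeg : ∀ v, D.deg v = 3)
    (hw : ∀ e, 1 ≤ w e) (h : (subdivide D w).IsEdgeConnected 2) :
    (subdivide D w).IsCubicSubdivision :=
  ⟨h, deg_le_three hdeg hw, hasTrivialTwoCuts hD h⟩

/-- When no chain has more than one edge, weak subdivision is the contraction of the chains of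
length zero. -/
def contraction (hw : ∀ e, w e ≤ 1) : Contraction D {e | w e = 0} (subdivide D w) where
  vMap := branch
  eMap x := x.1
  vMap_surjective x := by
    rcases exists_eq_branch_or_eq_node x with ⟨v, rfl⟩ | ⟨e, j, hj₀, hj, -⟩
    exacts [⟨v, rfl⟩, absurd (hw e) (by omega)]
  eMap_injective := by
    rintro ⟨e, i⟩ ⟨e', i'⟩ (rfl : e = e')
    have := hw e
    congr 1
    omega
  range_eMap := by
    ext e
    refine ⟨?_, fun he => ⟨⟨e, ⟨0, Nat.pos_of_ne_zero he⟩⟩, rfl⟩⟩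
    rintro ⟨⟨e, i⟩, rfl⟩ (he : w e = 0)
    exact absurd i.pos (by omega)
  vMap_src_eq_tgt e he := by
    rw [← node_zero, node_of_le (Nat.le_zero.2 he)]
  mem_iff S hS u v huv := iff_of_eq <|
    eq_of_branch_eq (fun v => v ∈ S) (fun e he => propext (hS e he)) huv
  map_ends := by
    rintro ⟨e, i⟩
    have hi : (i : ℕ) = 0 := by have := hw e; omega
    rw [show (⟨e, i⟩ : (subdivide D w).E) = chainEdge e i from rfl, ends_chainEdge, hi, node_zero,
      node_of_le (hw e)]
    rfl

end subdivide

namespace subdivide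

open Multigraph

variable {D : Multigraph} {w : D.E → ℕ}

theorem nV_subdivide : (subdivide D w).nV = Fintype.card (Quot (zeroRel D w)) + ∑ e, (w e - 1) := by
  change Fintype.card (Quot (zeroRel D w) ⊕ Σ e, Fin (w e - 1)) = _
  simp only [Fintype.card_sum, Fintype.card_sigma, Fintype.card_fin]

theorem nE_subdivide : (subdivide D w).nE = ∑ e, w e := by
  change Fintype.card (Σ e, Fin (w e)) = _
  simp only [Fintype.card_sigma, Fintype.card_fin]

/-- The chain lengths obtained from `w` by adding one edge to the chain of `a`. -/
def lengthen (w : D.E → ℕ) (a e : D.E) : ℕ := w e + if e = a then 1 else 0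

variable {a : D.E}

theorem lengthen_eq_zero_iff (ha : 0 < w a) (e : D.E) : lengthen w a e = 0 ↔ w e = 0 := by
  simp only [lengthen, Nat.add_eq_zero_iff, ite_eq_right_iff, one_ne_zero, imp_false,
    and_iff_left_iff_imp]
  rintro h rfl
  exact ha.ne' h

theorem zeroRel_lengthen (ha : 0 < w a) : zeroRel D (lengthen w a) = zeroRel D w := by
  funext u v
  simp only [zeroRel, lengthen_eq_zero_iff ha]

theorem zeroAcyclic_lengthen (ha : 0 < w a) (h : ZeroAcyclic D w) :
    ZeroAcyclic D (lengthen w a) := by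
  rw [ZeroAcyclic] at h ⊢
  rw [zeroRel_lengthen ha]
  simpa only [lengthen_eq_zero_iff ha] using h

theorem nE_subdivide_lengthen :
    (subdivide D (lengthen w a)).nE = (subdivide D w).nE + 1 := by
  simp only [nE_subdivide, lengthen, Finset.sum_add_distrib, sum_ite_eq', mem_univ, if_true]

theorem nV_subdivide_lengthen (ha : 0 < w a) :
    (subdivide D (lengthen w a)).nV = (subdivide D w).nV + 1 := by
  have hsub (e : D.E) : lengthen w a e - 1 = (w e - 1) + if e = a then 1 else 0 := by
    rw [lengthen]
    split_ifs with h
    · subst h; omega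
    · rfl
  simp only [nV_subdivide, hsub, Finset.sum_add_distrib, sum_ite_eq', mem_univ, if_true,
    zeroRel_lengthen ha, add_assoc]

variable {i : Fin (w a)}

/-- The vertices along the lengthened chains, in the subdivision of the `i`-th edge on the chain
of `a`: the subdividing vertex is number `i + 1` on that chain. -/
def lengthenedNode (i : Fin (w a)) (e : D.E) (j : ℕ) :
    ((subdivide D w).subdivideEdge (chainEdge a i)).V :=
  if e = a ∧ i < j then if j = i + 1 then newVertex else oldVertex (node e (j - 1))
  else oldVertex (node e j)

theorem lengthenedNode_of_not {e : D.E} {j : ℕ} (h : ¬(e = a ∧ i < j)) :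
    lengthenedNode i e j = oldVertex (node e j) := if_neg h

theorem lengthenedNode_self : lengthenedNode i a (i + 1) = newVertex :=
  (if_pos ⟨rfl, Nat.lt_succ_self _⟩).trans (if_pos rfl)

theorem lengthenedNode_add_one {j : ℕ} (h : i < j) :
    lengthenedNode i a (j + 1) = oldVertex (node a j) :=
  (if_pos ⟨rfl, by omega⟩).trans (if_neg (by omega))

theorem add_one_lt_lengthen (j : Fin (w a)) : (j + 1 : ℕ) < lengthen w a a := by
  simp [lengthen]

theorem lt_lengthen {e : D.E} (j : Fin (w e)) : (j : ℕ) < lengthen w a e :=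
  j.2.trans_le (Nat.le_add_right _ _)

/-- The edge of the lengthened weak subdivision corresponding to an edge of the subdivision of the
`i`-th edge on the chain of `a`. -/
def lengthenedEdge (i : Fin (w a)) (x : ((subdivide D w).subdivideEdge (chainEdge a i)).E) :
    (subdivide D (lengthen w a)).E :=
  Option.elim x (chainEdge a ⟨i + 1, add_one_lt_lengthen i⟩) fun y =>
    if h : y.1 = a ∧ i < (y.2 : ℕ) then
      chainEdge a ⟨y.2 + 1, by rw [lengthen, ← h.1]; simp⟩
    else chainEdge y.1 ⟨y.2, lt_lengthen y.2⟩

theorem lengthenedEdge_newEdge :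
    lengthenedEdge i newEdge = chainEdge a ⟨i + 1, add_one_lt_lengthen i⟩ := rfl

theorem lengthenedEdge_oldEdge_of_not {e : D.E} {j : Fin (w e)} (h : ¬(e = a ∧ i < (j : ℕ))) :
    lengthenedEdge i (oldEdge (chainEdge e j)) = chainEdge e ⟨j, lt_lengthen j⟩ := dif_neg h

theorem lengthenedEdge_oldEdge_of_lt {j : Fin (w a)} (h : i < j) :
    lengthenedEdge i (oldEdge (chainEdge a j)) = chainEdge a ⟨j + 1, add_one_lt_lengthen j⟩ :=
  dif_pos ⟨rfl, h⟩

theorem lengthenedEdge_surjective (i : Fin (w a)) : Function.Surjective (lengthenedEdge i) := by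
  rintro ⟨e, j, hj⟩
  by_cases he : e = a ∧ i < j
  · obtain ⟨rfl, hij⟩ := he
    obtain ⟨j, rfl⟩ := Nat.exists_eq_add_one.2 (Nat.zero_lt_of_lt hij)
    rcases (Nat.lt_succ_iff.1 hij).eq_or_lt with rfl | hij
    · exact ⟨newEdge, rfl⟩
    · exact ⟨oldEdge (chainEdge e ⟨j, by simpa [lengthen] using hj⟩),
        lengthenedEdge_oldEdge_of_lt hij⟩
  · have hj' : j < w e := by
      rw [lengthen] at hj
      split_ifs at hj with h
      · exact (not_lt.1 (he ⟨h, ·⟩)).trans_lt (h ▸ i.2)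
      · exact hj
    exact ⟨oldEdge (chainEdge e ⟨j, hj'⟩), lengthenedEdge_oldEdge_of_not he⟩

theorem map_ends_lengthenedEdge
    {p : (subdivide D (lengthen w a)).V → ((subdivide D w).subdivideEdge (chainEdge a i)).V}
    (hp : ∀ e, ∀ j ≤ lengthen w a e, p (node e j) = lengthenedNode i e j)
    (x : ((subdivide D w).subdivideEdge (chainEdge a i)).E) :
    ((subdivide D (lengthen w a)).ends (lengthenedEdge i x)).map p =
      ((subdivide D w).subdivideEdge (chainEdge a i)).ends x := by
  have map_ends (e : D.E) (j : Fin (lengthen w a e)) :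
      ((subdivide D (lengthen w a)).ends (chainEdge e j)).map p =
        s(lengthenedNode i e j, lengthenedNode i e (j + 1)) := by
    rw [ends_chainEdge, Sym2.map_mk, hp e _ j.2.le, hp e _ j.2]
  rcases eq_newEdge_or_exists_eq_oldEdge x with rfl | ⟨⟨e, j⟩, rfl⟩
  · rw [lengthenedEdge_newEdge, map_ends, lengthenedNode_self,
      lengthenedNode_add_one (Nat.lt_succ_self _)]
    rfl
  · change Sym2.map p (ends _ (lengthenedEdge i (oldEdge (chainEdge e j)))) =
      ends _ (oldEdge (chainEdge e j))
    have ends_of_ne (hne : chainEdge e j ≠ chainEdge a i) :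
        ((subdivide D w).subdivideEdge (chainEdge a i)).ends (oldEdge (chainEdge e j)) =
          s(oldVertex (node e j), oldVertex (node e (j + 1))) := by
      rw [ends_subdivideEdge_of_ne hne, ends_chainEdge, Sym2.map_mk]
    by_cases he : e = a ∧ i < (j : ℕ)
    · obtain ⟨rfl, hij⟩ := he
      rw [ends_of_ne fun h => hij.ne' (eq_and_eq_of_chainEdge_eq h).2,
        lengthenedEdge_oldEdge_of_lt hij, map_ends, lengthenedNode_add_one hij,
        lengthenedNode_add_one (Nat.lt_succ_of_lt hij)]
    · rw [lengthenedEdge_oldEdge_of_not he, map_ends, lengthenedNode_of_not he]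
      by_cases he' : e = a ∧ j = (i : ℕ)
      · obtain ⟨rfl, hij⟩ := he'
        obtain rfl := Fin.ext hij
        rw [lengthenedNode_self, ends_subdivideEdge_self]
        rfl
      · rw [ends_of_ne fun h => he' (eq_and_eq_of_chainEdge_eq h), lengthenedNode_of_not (by grind)]

theorem exists_lengthenedNode_eq (i : Fin (w a)) (e : D.E) {j : ℕ} (hj : j ≤ w e) :
    ∃ j' ≤ lengthen w a e, lengthenedNode i e j' = oldVertex (node e j) := by
  by_cases h : e = a ∧ i < j
  · obtain ⟨rfl, hij⟩ := h
    exact ⟨j + 1, by simpa [lengthen] using hj, lengthenedNode_add_one hij⟩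
  · exact ⟨j, hj.trans (Nat.le_add_right _ _), lengthenedNode_of_not h⟩

theorem isIso_subdivideEdge (i : Fin (w a)) :
    IsIso (subdivide D (lengthen w a)) ((subdivide D w).subdivideEdge (chainEdge a i)) := by
  have ha : 0 < w a := i.pos
  let c := Contraction.subdivideEdge (subdivide D w) (chainEdge a i)
  obtain ⟨p, hbranch, hnode⟩ := exists_map (w := lengthen w a) (fun v => oldVertex (branch v))
    (lengthenedNode i) (fun e => by simp [lengthenedNode, node_zero]) fun e => by
      by_cases he : e = a
      · subst he
        rw [show lengthen w e e = w e + 1 by simp [lengthen], lengthenedNode_add_one i.2,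
          node_of_le le_rfl]
      · rw [lengthenedNode_of_not (he ·.1), node_of_le (by simp [lengthen, he])]
  refine isIso_of_surjective (p := p) (r := lengthenedEdge i) ?_ (lengthenedEdge_surjective i)
    ?_ ?_ (map_ends_lengthenedEdge hnode)
  · rintro (_ | x)
    · exact ⟨node a (i + 1), (hnode a _ (add_one_lt_lengthen i).le).trans lengthenedNode_self⟩
    · rcases exists_eq_branch_or_eq_node x with ⟨v, rfl⟩ | ⟨e, j, -, hj, rfl⟩
      · exact ⟨branch v, hbranch v⟩
      · obtain ⟨j', hj', h⟩ := exists_lengthenedNode_eq i e hj.le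
        exact ⟨node e j', (hnode e j' hj').trans h⟩
  · rw [nV_subdivide_lengthen ha, c.nV_eq_add_one (isSeriesVertex_subdivideEdge _).src_ne_tgt]
  · rw [nE_subdivide_lengthen, c.nE_eq_add_one]

end subdivide

/-- `X` has a weak distillation in `𝒟_k`. -/
def HasDkDistillation (k : ℕ) (X : Multigraph) : Prop :=
  ∃ (D : Multigraph) (w : D.E → ℕ), memDk k D ∧ IsWeakSubdivision X D w

section HasDkDistillation

open Multigraph

variable {k : ℕ} {X Y D : Multigraph}

theorem memDk.isEdgeConnected (hD : memDk k D) : D.IsEdgeConnected 3 :=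
  isEdgeConnected_iff_forall_disconnects.2 hD.2.2.1

theorem HasDkDistillation.of_isIso (h : IsIso Y X) : HasDkDistillation k X → HasDkDistillation k Y
  | ⟨D, w, hD, hw, hX⟩ => ⟨D, w, hD, hw, h.trans hX⟩

theorem HasDkDistillation.hasTrivialTwoCuts (h : HasDkDistillation k X)
    (hX : X.IsEdgeConnected 2) : X.HasTrivialTwoCuts := by
  obtain ⟨D, w, hD, -, hiso⟩ := h
  obtain ⟨c⟩ := hiso.nonempty_contraction
  exact hiso.symm.hasTrivialTwoCuts <|
    subdivide.hasTrivialTwoCuts hD.isEdgeConnected (c.isEdgeConnected hX)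

theorem HasDkDistillation.subdivideEdge (h : HasDkDistillation k X) (f : X.E) :
    HasDkDistillation k (X.subdivideEdge f) := by
  obtain ⟨D, w, hD, hw, hX⟩ := h
  obtain ⟨c⟩ := hX.symm.nonempty_contraction
  obtain ⟨a, i, hai⟩ : ∃ a i, c.eMap f = subdivide.chainEdge a i := ⟨_, _, rfl⟩
  have hiso := c.isIso_subdivideEdge f
  rw [hai] at hiso
  exact ⟨D, subdivide.lengthen w a, hD, subdivide.zeroAcyclic_lengthen i.pos hw,
    ((subdivide.isIso_subdivideEdge i).trans hiso).symm⟩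

/-- Equality of the exceedances forces the contracted edges to form a forest. -/
theorem HasDkDistillation.of_contraction (hD : memDk k D) {Z : Set D.E} (c : Contraction D Z X)
    (hX : X.nE = X.nV + k) : HasDkDistillation k X := by
  let w : D.E → ℕ := fun e => if e ∈ Z then 0 else 1
  have hw (e : D.E) : w e ≤ 1 := by simp only [w]; split_ifs <;> simp
  have hZ : {e | w e = 0} = Z := by ext e; simp [w]
  have hiso : IsIso X (subdivide D w) :=
    c.isIso_of_contraction ((subdivide.contraction hw).congr hZ)
  refine ⟨D, w, hD, ?_, hiso⟩
  obtain ⟨d⟩ := hiso.nonempty_contraction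
  have hV : X.nV = Fintype.card (Quot (zeroRel D w)) := by
    rw [d.nV_eq, subdivide.nV_subdivide, sum_eq_zero fun e _ => Nat.sub_eq_zero_of_le (hw e),
      add_zero]
  have hE : X.nE + (univ.filter fun e => w e = 0).card = D.nE := by
    rw [d.nE_eq, subdivide.nE_subdivide, card_filter, ← sum_add_distrib, Multigraph.nE,
      ← card_univ, card_eq_sum_ones]
    refine sum_congr rfl fun e _ => ?_
    have := hw e
    split_ifs <;> omega
  have hexc := hD.2.2.2
  rw [ZeroAcyclic]
  change _ = D.nV
  omega

end HasDkDistillation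

namespace Multigraph

variable {X : Multigraph} {j : ℕ} {v : X.V}

/-- The expansion of `X` at `v` that moves the edges of `P` to the new vertex; a loop at `v` keeps
its terminal incidence at `v`. -/
abbrev splitOff (X : Multigraph) (v : X.V) (P : Finset X.E) : Multigraph :=
  X.expand v P {g | g ∈ P ∧ X.src g ≠ v}

section SplitOff

variable {P : Finset X.E} {g : X.E}

theorem ends_splitOff_of_mem (hg : g ∈ P) {u : X.V} (h : X.ends g = s(v, u)) :
    (X.splitOff v P).ends (oldEdge g) = s(newVertex, oldVertex u) := by
  rw [ends_oldEdge]
  rcases Sym2.eq_iff.1 h with ⟨hs, ht⟩ | ⟨hs, ht⟩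
  · simp [hs, ht, hg]
  · by_cases huv : u = v
    · simp [hs, ht, hg, huv]
    · simp [hs, ht, hg, huv, Sym2.eq_swap]

theorem ends_splitOff_of_notMem (hg : g ∉ P) :
    (X.splitOff v P).ends (oldEdge g) = s(oldVertex (X.src g), oldVertex (X.tgt g)) := by
  simp [ends_oldEdge, hg]

theorem cutEdges_splitOff (hP : ∀ g ∈ P, v ∈ X.ends g) {A : Finset (X.splitOff v P).V}
    (hnew : newVertex ∈ A) (hold : oldVertex v ∉ A) :
    (X.splitOff v P).cutEdges A =
      insert newEdge ((symmDiff (X.cutEdges {u | oldVertex u ∈ A}) P).image oldEdge) := by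
  ext e
  rcases eq_newEdge_or_exists_eq_oldEdge e with rfl | ⟨g, rfl⟩
  · simp [mem_cutEdges_of_ends_eq ends_newEdge, hnew, hold]
  · rw [mem_insert, or_iff_right (newEdge_ne_oldEdge g).symm, oldEdge_injective.mem_finset_image,
      mem_symmDiff]
    by_cases hg : g ∈ P
    · obtain ⟨u, hu⟩ := hP g hg
      simp [mem_cutEdges_of_ends_eq (ends_splitOff_of_mem hg hu), mem_cutEdges_of_ends_eq hu, hg,
        hnew, hold]
    · simp [mem_cutEdges_of_ends_eq (ends_splitOff_of_notMem hg), mem_cutEdges, hg]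

theorem IsEdgeConnected.splitOff (hX : X.IsEdgeConnected j) (hP : ∀ g ∈ P, v ∈ X.ends g)
    (h : ∀ S : Finset X.V, v ∉ S → j ≤ (symmDiff (X.cutEdges S) P).card + 1) :
    (X.splitOff v P).IsEdgeConnected j := by
  have hsep : ∀ A, newVertex ∈ A → oldVertex v ∉ A → j ≤ ((X.splitOff v P).cutEdges A).card := by
    intro A hnew hold
    rw [cutEdges_splitOff hP hnew hold,
      card_insert_of_notMem (by simp [(newEdge_ne_oldEdge _).symm]),
      card_image_of_injective _ oldEdge_injective]
    exact h _ (by simpa using hold)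
  intro A hA hA'
  by_cases hnew : newVertex ∈ A <;> by_cases hold : oldVertex v ∈ A
  rotate_left
  · exact hsep A hnew hold
  · exact cutEdges_compl A ▸ hsep Aᶜ (mem_compl.2 hnew) (by simpa using hold)
  all_goals
    refine (Contraction.expand X v _ _).le_card_cutEdges hX hA hA' ?_
    rintro g rfl
    simp [mem_cutEdges_of_ends_eq ends_newEdge, hnew, hold]

theorem IsEdgeConnected.splitOff_pair (hX : X.IsEdgeConnected j) (hj : j ≤ 3) {a b : X.E}
    (hab : a ≠ b) (ha : v ∈ X.ends a) (hb : v ∈ X.ends b)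
    (h : ∀ S : Finset X.V, v ∉ S → (X.cutEdges S).card ≤ j → a ∈ X.cutEdges S → b ∉ X.cutEdges S) :
    (X.splitOff v {a, b}).IsEdgeConnected j := by
  refine hX.splitOff (by simp [ha, hb]) fun S hv => ?_
  have hpair := card_pair hab
  rcases S.eq_empty_or_nonempty with rfl | hS
  · have hcut : X.cutEdges ∅ = ⊥ := by simp [cutEdges]
    rw [hcut, bot_symmDiff]
    omega
  have hle := hX S hS (by rintro rfl; exact hv (mem_univ v))
  have hdiff : (X.cutEdges S \ {a, b}).card ≤ (symmDiff (X.cutEdges S) {a, b}).card :=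
    card_le_card le_sup_left
  have hsum := card_sdiff_add_card_inter (X.cutEdges S) {a, b}
  by_cases hmem : a ∈ X.cutEdges S ∧ b ∈ X.cutEdges S
  · have hlt : j < (X.cutEdges S).card := by
      by_contra! hle'
      exact h S hv hle' hmem.1 hmem.2
    have := card_le_card (inter_subset_right (s₁ := X.cutEdges S) (s₂ := {a, b}))
    omega
  · have : (X.cutEdges S ∩ {a, b}).card < ({a, b} : Finset X.E).card :=
      card_lt_card <| inter_subset_right.ssubset_of_ne fun heq => hmem <| by
        simpa [insert_subset_iff] using inter_eq_right.1 heq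
    omega

end SplitOff

section Submodular

theorem IsEdgeConnected.card_cutEdges_union_le (hX : X.IsEdgeConnected j) {S T : Finset X.V}
    (hS : (X.cutEdges S).card ≤ j) (hT : (X.cutEdges T).card ≤ j) {e : X.E}
    (he : e ∈ X.cutEdges (S ∩ T)) : (X.cutEdges (S ∪ T)).card ≤ j := by
  have := X.card_cutEdges_inter_add_card_cutEdges_union_le S T
  have := hX.le_card_cutEdges he
  omega

theorem mem_cutEdges_iff_of_notMem {e : X.E} {u : X.V} (he : X.ends e = s(v, u)) {S : Finset X.V}
    (hv : v ∉ S) : e ∈ X.cutEdges S ↔ u ∈ S := by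
  simp [mem_cutEdges_of_ends_eq he, hv]

/-- The union of all sets `S` as in the hypothesis is one of them by submodularity, and its cut
contains the cut of `{v}`. -/
theorem IsEdgeConnected.card_cutEdges_singleton_le (hX : X.IsEdgeConnected j) {a : X.E}
    (ha : a ∈ X.cutEdges {v})
    (h : ∀ b ∈ X.cutEdges {v}, ∃ S : Finset X.V, v ∉ S ∧ (X.cutEdges S).card ≤ j ∧
      a ∈ X.cutEdges S ∧ b ∈ X.cutEdges S) :
    (X.cutEdges {v}).card ≤ j := by
  obtain ⟨w, -, hw⟩ := exists_ends_eq_of_mem_cutEdges ha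
  let 𝒮 : Finset (Finset X.V) := {S | v ∉ S ∧ w ∈ S ∧ (X.cutEdges S).card ≤ j}
  have h𝒮 : ∀ {S}, S ∈ 𝒮 ↔ v ∉ S ∧ w ∈ S ∧ (X.cutEdges S).card ≤ j := by simp [𝒮]
  have hex : ∀ b ∈ X.cutEdges {v}, ∃ S ∈ 𝒮, b ∈ X.cutEdges S := by
    intro b hb
    obtain ⟨S, hvS, hcard, haS, hbS⟩ := h b hb
    exact ⟨S, h𝒮.2 ⟨hvS, (mem_cutEdges_iff_of_notMem hw hvS).1 haS, hcard⟩, hbS⟩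
  have hne : 𝒮.Nonempty := (hex a ha).imp fun S hS => hS.1
  have hunion : ∀ S ∈ 𝒮, ∀ T ∈ 𝒮, S ∪ T ∈ 𝒮 := by
    simp only [h𝒮]
    rintro S ⟨hvS, hwS, hS⟩ T ⟨hvT, hwT, hT⟩
    refine ⟨by simp [hvS, hvT], mem_union_left _ hwS, hX.card_cutEdges_union_le hS hT (e := a) ?_⟩
    exact (mem_cutEdges_iff_of_notMem hw (by simp [hvS])).2 (mem_inter.2 ⟨hwS, hwT⟩)
  have hsup := h𝒮.1 (sup'_mem (𝒮 : Set (Finset X.V)) hunion 𝒮 hne id fun S hS => hS)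
  refine (card_le_card fun b hb => ?_).trans hsup.2.2
  obtain ⟨u, -, hu⟩ := exists_ends_eq_of_mem_cutEdges hb
  obtain ⟨S, hS, hbS⟩ := hex b hb
  exact (mem_cutEdges_iff_of_notMem hu hsup.1).2 <|
    le_sup' id hS ((mem_cutEdges_iff_of_notMem hu (h𝒮.1 hS).1).1 hbS)

end Submodular

theorem exists_ne_mem_ends_of_two_lt_deg (hv : 2 < X.deg v) (a : X.E) :
    ∃ b, b ≠ a ∧ v ∈ X.ends b := by
  by_contra! h
  rw [deg_eq_sum, sum_eq_single a] at hv
  · split_ifs at hv <;> omega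
  · intro b _ hb
    have := h b hb
    simp_all [ends, Sym2.mem_iff, eq_comm]
  · simp

theorem deg_le_card_cutEdges_singleton (h : ∀ e, v ∈ X.ends e → X.src e ≠ X.tgt e) :
    X.deg v ≤ (X.cutEdges {v}).card := by
  rw [deg_eq_sum, cutEdges, card_filter]
  refine sum_le_sum fun e _ => ?_
  have hloop : X.src e = v → X.tgt e ≠ v := fun hs ht =>
    h e (Sym2.mem_iff.2 (.inl hs.symm)) (hs.trans ht.symm)
  by_cases hs : X.src e = v <;> by_cases ht : X.tgt e = v <;> simp_all

theorem IsEdgeConnected.exists_pair_notMem_cutEdges (hX : X.IsEdgeConnected j) (hj : 2 ≤ j)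
    (hv : j < X.deg v) :
    ∃ a b, a ≠ b ∧ v ∈ X.ends a ∧ v ∈ X.ends b ∧ ∀ S : Finset X.V, v ∉ S →
      (X.cutEdges S).card ≤ j → a ∈ X.cutEdges S → b ∉ X.cutEdges S := by
  by_cases! hloop : ∃ l, v ∈ X.ends l ∧ X.src l = X.tgt l
  · obtain ⟨l, hl, hll⟩ := hloop
    obtain ⟨b, hb, hvb⟩ := exists_ne_mem_ends_of_two_lt_deg (hj.trans_lt hv) l
    exact ⟨l, b, hb.symm, hl, hvb, fun S _ _ h => absurd hll (src_ne_tgt_of_mem_cutEdges h)⟩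
  · have hlt := hv.trans_le (deg_le_card_cutEdges_singleton hloop)
    have hmem : ∀ e ∈ X.cutEdges {v}, v ∈ X.ends e := by
      intro e he
      obtain ⟨u, -, hu⟩ := exists_ends_eq_of_mem_cutEdges he
      exact hu ▸ Sym2.mem_mk_left v u
    obtain ⟨a, ha⟩ := card_pos.1 (j.zero_le.trans_lt hlt)
    by_contra! hbad
    have hex : ∀ b ∈ X.cutEdges {v}, b ≠ a → ∃ S : Finset X.V, v ∉ S ∧ (X.cutEdges S).card ≤ j ∧
        a ∈ X.cutEdges S ∧ b ∈ X.cutEdges S := fun b hb hba =>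
      hbad a b hba.symm (hmem a ha) (hmem b hb)
    obtain ⟨b, hb, hba⟩ := exists_mem_ne (by omega : 1 < (X.cutEdges {v}).card) a
    refine hlt.not_ge (hX.card_cutEdges_singleton_le ha fun c hc => ?_)
    by_cases hca : c = a
    · exact (hex b hb hba).imp fun S hS => ⟨hS.1, hS.2.1, hS.2.2.1, hca ▸ hS.2.2.1⟩
    · exact hex c hc hca

end Multigraph

section CubicResolution

open Multigraph

variable {k : ℕ} {X : Multigraph}

theorem Multigraph.IsEdgeConnected.three_le_deg (hk : 1 ≤ k) (hX : X.IsEdgeConnected 3)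
    (hE : X.nE = X.nV + k) (v : X.V) : 3 ≤ X.deg v := by
  cases subsingleton_or_nontrivial X.V
  · have hdeg := X.sum_deg_eq_two_mul_nE
    rw [Fintype.sum_subsingleton _ v] at hdeg
    have hV : 0 < X.nV := Fintype.card_pos_iff.2 ⟨v⟩
    omega
  · exact hX.le_deg v

/-- Splitting pairs of edges off vertices of degree at least `4` ends with a cubic graph, since each
step adds a vertex and `2k` bounds the number of vertices. -/
theorem exists_memDk_contraction (hk : 1 ≤ k) (hX : X.IsEdgeConnected 3) (hE : X.nE = X.nV + k) :
    ∃ (D : Multigraph) (Z : Set D.E), memDk k D ∧ Nonempty (Contraction D Z X) := by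
  induction h : 2 * k - X.nV using Nat.strong_induction_on generalizing X with
  | _ m ih =>
    have hdeg := hX.three_le_deg hk hE
    by_cases! hcubic : ∀ v, X.deg v = 3
    · exact ⟨X, ∅, ⟨(hX.mono (by omega)).connected, hcubic,
        isEdgeConnected_iff_forall_disconnects.1 hX, hE⟩, ⟨.refl X⟩⟩
    obtain ⟨v, hv⟩ := hcubic
    have hv : 3 < X.deg v := (hdeg v).lt_of_ne' hv
    have hlt : 3 * X.nV < 2 * X.nE := by
      rw [← sum_deg_eq_two_mul_nE]
      have : ∑ _ : X.V, 3 < ∑ u, X.deg u := sum_lt_sum (fun u _ => hdeg u) ⟨v, mem_univ v, hv⟩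
      simpa [nV, mul_comm] using this
    obtain ⟨a, b, hab, ha, hb, hgood⟩ := hX.exists_pair_notMem_cutEdges (by omega) hv
    let c : Contraction (X.splitOff v {a, b}) {newEdge} X := .expand X v _ _
    have hV := c.nV_eq_add_one src_ne_tgt_newEdge
    have hE' := c.nE_eq_add_one
    obtain ⟨D, Z, hD, ⟨d⟩⟩ :=
      ih _ (by omega) (hX.splitOff_pair le_rfl hab ha hb hgood) (by omega) rfl
    exact ⟨D, _, hD, ⟨c.comp d⟩⟩

theorem Multigraph.IsEdgeConnected.hasDkDistillation (hk : 1 ≤ k) (hX : X.IsEdgeConnected 3)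
    (hE : X.nE = X.nV + k) : HasDkDistillation k X :=
  have ⟨_, _, hD, ⟨d⟩⟩ := exists_memDk_contraction hk hX hE
  .of_contraction hD d hE

end CubicResolution

section Equivalence

open Multigraph

variable {X Y : Multigraph}

theorem IsShiftOf.subdivideEdge_of_contraction (hX : X.IsEdgeConnected 2) {H : Multigraph}
    {e e' : H.E} (c : Contraction H {e'} X) {A : Finset H.V} (hA : H.cutEdges A = {e, e'})
    (hne : e ≠ e') {f : X.E} (hf : c.eMap f = e) : IsShiftOf (X.subdivideEdge f) H := by
  obtain ⟨d⟩ := c.nonempty_subdivideEdge f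
  rw [hf] at d
  obtain ⟨A', hA'⟩ := exists_cutEdges_subdivideEdge_eq hne.symm hA
  exact .of_contraction (hX.subdivideEdge f) d (.subdivideEdge H e) hA' (newEdge_ne_oldEdge e')

theorem IsShiftOf.subdivideEdge_of_eMap_eq (hX : X.IsEdgeConnected 2) {H : Multigraph} {e e' : H.E}
    (c : Contraction H {e'} X) (d : Contraction H {e} Y) {A : Finset H.V}
    (hA : H.cutEdges A = {e, e'}) (hne : e ≠ e') {f : X.E} {f' : Y.E} (hf : c.eMap f = d.eMap f') :
    IsShiftOf (X.subdivideEdge f) (Y.subdivideEdge f') := by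
  obtain ⟨c'⟩ := c.nonempty_subdivideEdge f
  obtain ⟨d'⟩ := d.nonempty_subdivideEdge f'
  rw [← hf] at d'
  let n := Contraction.subdivideEdge H (c.eMap f)
  refine .of_contraction (hX.subdivideEdge f) c' d' (C := n.preimage A) ?_
    (oldEdge_injective.ne hne)
  rw [n.cutEdges_preimage, hA, image_insert, image_singleton]
  rfl

/-- If the shifted edge is the one to be subdivided, the two subdivisions are related by two shifts
through the graph in which the edge has been expanded but not yet contracted. -/
theorem IsShiftOf.exists_equivalentGraphs_subdivideEdge (h : IsShiftOf X Y)
    (hX : X.IsEdgeConnected 2) (f : X.E) :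
    ∃ f', EquivalentGraphs (X.subdivideEdge f) (Y.subdivideEdge f') := by
  obtain ⟨H, e, e', A, hne, hA, ⟨c⟩, ⟨d⟩⟩ := h.exists_contraction
  by_cases hf : c.eMap f = e
  · obtain ⟨f', hf'⟩ := d.exists_eMap_eq (g := e') hne.symm
    have hY : Y.IsEdgeConnected 2 := h.isEdgeConnected hX
    have hXH := IsShiftOf.subdivideEdge_of_contraction hX c hA hne hf
    have hYH := IsShiftOf.subdivideEdge_of_contraction hY d (hA.trans (Finset.pair_comm e e'))
      hne.symm hf'
    exact ⟨f', .head hXH (.single hYH.symm)⟩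
  · obtain ⟨f', hf'⟩ := d.exists_eMap_eq hf
    exact ⟨f', .single (.subdivideEdge_of_eMap_eq hX c d hA hne hf'.symm)⟩

theorem EquivalentGraphs.exists_equivalentGraphs_subdivideEdge (h : EquivalentGraphs X Y)
    (hX : X.IsEdgeConnected 2) (f : X.E) :
    ∃ f', EquivalentGraphs (X.subdivideEdge f) (Y.subdivideEdge f') := by
  induction h using Relation.ReflTransGen.head_induction_on with
  | refl => exact ⟨f, .refl⟩
  | head hs _ ih =>
    obtain ⟨f₁, hf₁⟩ := hs.exists_equivalentGraphs_subdivideEdge hX f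
    obtain ⟨f₂, hf₂⟩ := ih (hs.isEdgeConnected hX) f₁
    exact ⟨f₂, hf₁.trans hf₂⟩

end Equivalence

section Distillations

open Multigraph

variable {k : ℕ} {X Y D : Multigraph}

theorem Multigraph.IsEdgeConnected.exists_card_cutEdges_eq {j : ℕ} (h : X.IsEdgeConnected j)
    (h' : ¬ X.IsEdgeConnected (j + 1)) : ∃ A, (X.cutEdges A).card = j := by
  simp only [IsEdgeConnected, not_forall] at h'
  obtain ⟨A, hA, hA', hlt⟩ := h'
  exact ⟨A, le_antisymm (by omega) (h A hA hA')⟩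

theorem Multigraph.HasTrivialTwoCuts.hasDkDistillation (hk : 1 ≤ k) (hX : X.IsEdgeConnected 2)
    (ht : X.HasTrivialTwoCuts) (hE : X.nE = X.nV + k) : HasDkDistillation k X := by
  induction h : X.nV using Nat.strong_induction_on generalizing X with
  | _ n ih =>
    by_cases h₃ : X.IsEdgeConnected 3
    · exact h₃.hasDkDistillation hk hE
    obtain ⟨x, hxu, hx⟩ : ∃ x, ({x} : Finset X.V) ≠ univ ∧ X.deg x = 2 := by
      obtain ⟨A, hA⟩ := hX.exists_card_cutEdges_eq h₃
      obtain ⟨B, hB, hdeg⟩ := ht A hA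
      obtain ⟨⟨x, hx⟩, hBu⟩ := nonempty_and_ne_univ_of_card_cutEdges (hB ▸ hA)
      exact ⟨x, fun hu => hBu (univ_subset_iff.1 (hu ▸ singleton_subset_iff.2 hx)), hdeg x hx⟩
    obtain ⟨e, f, hs⟩ := isSeriesVertex_of_deg_eq_two hX hxu hx
    let c := Contraction.contract X e
    obtain ⟨f', rfl⟩ := c.exists_eMap_eq hs.ne.symm
    have hV := c.nV_eq_add_one hs.src_ne_tgt
    have hE' := c.nE_eq_add_one
    have hD := ih (X.contract e).nV (by omega) (c.isEdgeConnected hX)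
      (c.hasTrivialTwoCuts_of_singleton hs.src_ne_tgt ht) (by omega) rfl
    exact (hD.subdivideEdge f').of_isIso (c.isIso_subdivideEdge_of_isSeriesVertex hs)

theorem Multigraph.IsEdgeConnected.hasDkDistillation_iff (hk : 1 ≤ k) (hX : X.IsEdgeConnected 2)
    (hE : X.nE = X.nV + k) : HasDkDistillation k X ↔ X.HasTrivialTwoCuts :=
  ⟨fun h => h.hasTrivialTwoCuts hX, fun h => h.hasDkDistillation hk hX hE⟩

theorem Multigraph.IsEdgeConnected.exists_equivalentGraphs_hasDkDistillation (hk : 1 ≤ k)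
    (hX : X.IsEdgeConnected 2) (hE : X.nE = X.nV + k) :
    ∃ Y, EquivalentGraphs X Y ∧ HasDkDistillation k Y := by
  induction h : X.nV using Nat.strong_induction_on generalizing X with
  | _ n ih =>
    by_cases h₃ : X.IsEdgeConnected 3
    · exact ⟨X, .refl, h₃.hasDkDistillation hk hE⟩
    obtain ⟨A, hA⟩ := hX.exists_card_cutEdges_eq h₃
    obtain ⟨e, f, hef, hcut⟩ := card_eq_two.1 hA
    have he : X.src e ≠ X.tgt e := src_ne_tgt_of_mem_cutEdges (A := A) (by simp [hcut])
    let c := Contraction.contract X e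
    have hV := c.nV_eq_add_one he
    have hE' := c.nE_eq_add_one
    have hc : (X.contract e).IsEdgeConnected 2 := c.isEdgeConnected hX
    obtain ⟨Y, hY, hD⟩ := ih _ (by omega) hc (by omega) rfl
    obtain ⟨f', hf'⟩ := c.exists_eMap_eq (g := f) hef.symm
    have hshift : IsShiftOf ((X.contract e).subdivideEdge f') X :=
      .subdivideEdge_of_contraction hc c (hcut.trans (Finset.pair_comm e f)) hef.symm hf'
    obtain ⟨f₂, hf₂⟩ := hY.exists_equivalentGraphs_subdivideEdge hc f'
    exact ⟨Y.subdivideEdge f₂, .head hshift.symm hf₂, hD.subdivideEdge f₂⟩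

theorem EquivalentGraphs.hasDkDistillation_of_one_le (hk : 1 ≤ k) (hX : X.IsEdgeConnected 2)
    (hE : X.nE = X.nV + k) (h : EquivalentGraphs X Y) {w : D.E → ℕ} (hD : memDk k D)
    (hw : ∀ e, 1 ≤ w e) (hY : IsIso Y (subdivide D w)) : HasDkDistillation k X := by
  obtain ⟨c⟩ := hY.nonempty_contraction
  have hsub := subdivide.isCubicSubdivision hD.isEdgeConnected hD.2.1 hw
    (c.isEdgeConnected (h.isEdgeConnected hX))
  have hX' := h.symm.isCubicSubdivision (hY.symm.isCubicSubdivision hsub)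
  exact hX'.hasTrivialTwoCuts.hasDkDistillation hk hX hE

theorem EquivalentGraphs.hasDkDistillation_of_le_one (hk : 1 ≤ k)
    (hE : X.nE = X.nV + k) (h : EquivalentGraphs X Y) {w : D.E → ℕ} (hD : memDk k D)
    (hw : ∀ e, w e ≤ 1) (hY : IsIso Y (subdivide D w)) : HasDkDistillation k X := by
  obtain ⟨c⟩ := hY.symm.nonempty_contraction
  have hY₃ : Y.IsEdgeConnected 3 :=
    c.isEdgeConnected ((subdivide.contraction hw).isEdgeConnected hD.isEdgeConnected)
  exact (h.symm.isEdgeConnected hY₃).hasDkDistillation hk hE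

end Distillations

/-- (a) a bridgeless G has a weak distillation in 𝒟_k iff every 2-bond of
G is trivial (its two edges belong to one chain, i.e. one side of the bond consists of
degree-2 vertices); (b) G is equivalent to some G† with a weak distillation in 𝒟_k;
(c) if G has no weak distillation in 𝒟_k, then every such G† is imbalanced and has a
zero chain with respect to each of its weak distillations in 𝒟_k. -/
theorem bridgeless_graphs_and_Dk (n k : ℕ) (hn : 1 ≤ n) (hk : 1 ≤ k)
    (G : Multigraph) (hG : memG G n (n + k)) (hbl : G.Bridgeless) :
    ((∃ (D : Multigraph) (w : D.E → ℕ), memDk k D ∧ IsWeakSubdivision G D w) ↔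
      (∀ F : Finset G.E, G.IsBond F → F.card = 2 →
        ∃ A : Finset G.V, A.Nonempty ∧ A ≠ Finset.univ ∧ F = G.cutEdges A ∧
          ∀ v ∈ A, G.deg v = 2)) ∧
    (∃ Gd : Multigraph, EquivalentGraphs G Gd ∧
      ∃ (D : Multigraph) (w : D.E → ℕ), memDk k D ∧ IsWeakSubdivision Gd D w) ∧
    ((¬ ∃ (D : Multigraph) (w : D.E → ℕ), memDk k D ∧ IsWeakSubdivision G D w) →
      ∀ Gd : Multigraph, EquivalentGraphs G Gd →
        ∀ (D : Multigraph) (w : D.E → ℕ), memDk k D → IsWeakSubdivision Gd D w →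
          ¬ BalancedWeights w ∧ ∃ e : D.E, w e = 0) := by
  obtain ⟨hV, hE, hC⟩ := hG
  have hG₂ := Multigraph.isEdgeConnected_two hC hbl
  have hEV : G.nE = G.nV + k := by omega
  refine ⟨(hG₂.hasDkDistillation_iff hk hEV).trans hG₂.hasTrivialTwoCuts_iff,
    hG₂.exists_equivalentGraphs_hasDkDistillation hk hEV, ?_⟩
  rintro hno Gd hGd D w hD ⟨-, hiso⟩
  obtain ⟨e, he⟩ : ∃ e, w e = 0 := by
    by_contra! hw
    exact hno <| hGd.hasDkDistillation_of_one_le hk hG₂ hEV hD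
      (fun e => Nat.one_le_iff_ne_zero.2 (hw e)) hiso
  refine ⟨fun hbal => ?_, e, he⟩
  have hw (f : D.E) : w f ≤ 1 := by simpa [he] using hbal f e
  exact hno (hGd.hasDkDistillation_of_le_one hk hEV hD hw hiso)
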